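/- arXiv:math/0411533 — 7 statements merged into one kernel-verified Lean document; each statement's English description precedes it below -/
import Mathlib

section
/- Let F be an algebraically closed field of characteristic different from 2, let V be a finite-dimensional F-vector space, and let Φ₁ and Φ₂ be quadratic forms on V such that for all r, s ∈ F not both zero, the quadratic form rΦ₁ + sΦ₂ has rank at least 5. Then the set of common zeros {v ∈ V : Φ₁(v) = 0 and Φ₂(v) = 0} is not contained in any finite union of hyperplanes of V. -/
/-!
The idea is to show that every minimal prime `P` over the ideal `(φ₁, φ₂)` of the two polynomials
representing `Φ₁` and `Φ₂` in coordinates contains no nonzero linear form.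

Suppose `P` contains the linear form `ℓ` of a functional `L ≠ 0`. Since the pencil has rank at
least `5`, no form in it restricts to a product of two linear forms on the hyperplane `ker L`
(`rank_le_four_of_eq_mul_on_ker`). Hence `φ₁` restricted to `ker L` is an irreducible polynomial
(`irreducible_of_not_mul`), and it does not divide the restriction of `φ₂`. This gives a chain of
primes `0 < (ℓ) < (ℓ, φ₁) < P`, so `P` has height at least `3`, whereas Krull's height theorem
bounds the height of `P` by `2`.

If the common zeros were covered by the hyperplanes `ker L`, `L ∈ t`, then by the Nullstellensatz
the product of the corresponding linear forms would lie in the radical of `(φ₁, φ₂)`, hence one of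
them would lie in a minimal prime `P`.
-/

/-- The rank of a quadratic form `Φ` on a finite-dimensional space `V`: the codimension of the
radical of `V` with respect to `Φ`, i.e. `dim V` minus the dimension of the kernel of the polar
bilinear form of `Φ`. -/
noncomputable def QuadraticForm.rank {F : Type*} [Field F] {V : Type*} [AddCommGroup V]
    [Module F V] (Φ : QuadraticForm F V) : ℕ :=
  Module.finrank F V - Module.finrank F (LinearMap.ker (QuadraticMap.polarBilin Φ))

open MvPolynomial

/-- If `Φ` is a product of two linear functionals on the hyperplane `ker L`, then the radical of
`Φ` contains the common kernel of four functionals: `L`, the two factors, and the pairing with a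
vector `w` outside the hyperplane. -/
lemma rank_le_four_of_eq_mul_on_ker {F V : Type*} [Field F] [AddCommGroup V] [Module F V]
    [FiniteDimensional F V] (Φ : QuadraticForm F V) (L l m : Module.Dual F V) (w : V)
    (hw : L w = 1) (h : ∀ v, L v = 0 → Φ v = l v * m v) : Φ.rank ≤ 4 := by
  let f : V →ₗ[F] (Fin 4 → F) := LinearMap.pi ![L, l, m, QuadraticMap.polarBilin Φ w]
  have hle : LinearMap.ker f ≤ LinearMap.ker (QuadraticMap.polarBilin Φ) := by
    intro x hx
    have hx' : ∀ i, f x i = 0 := fun i => congrFun (LinearMap.mem_ker.1 hx) i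
    have h0 : L x = 0 := hx' 0
    have h1 : l x = 0 := hx' 1
    have h2 : m x = 0 := hx' 2
    have h3 : QuadraticMap.polar Φ w x = 0 := hx' 3
    have key : ∀ y, L y = 0 → QuadraticMap.polar Φ x y = 0 := by
      intro y hy
      simp [QuadraticMap.polar, h (x + y) (by simp [h0, hy]), h x h0, h y hy, h1, h2]
    rw [LinearMap.mem_ker]
    ext y
    have hy := key (y - L y • w) (by simp [hw])
    have : QuadraticMap.polarBilin Φ x y
        = QuadraticMap.polar Φ x (y - L y • w) + L y * QuadraticMap.polar Φ w x := by
      rw [QuadraticMap.polar_sub_right, QuadraticMap.polar_smul_right,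
        QuadraticMap.polar_comm Φ w x]
      simp
    rw [this, hy, h3]
    simp
  have hrn := LinearMap.finrank_range_add_finrank_ker f
  have hr : Module.finrank F (LinearMap.range f) ≤ 4 := by
    simpa using Submodule.finrank_le (LinearMap.range f)
  have := Submodule.finrank_mono hle
  unfold QuadraticForm.rank
  omega

lemma exists_eval_eq_linear_of_isHomogeneous_one {F : Type*} [Field F] {n : ℕ}
    {p : MvPolynomial (Fin n) F} (hp : p.IsHomogeneous 1) :
    ∃ l : Module.Dual F (Fin n → F), ∀ x, eval x p = l x := by
  have hspan {q : MvPolynomial (Fin n) F} (hq : q ∈ Submodule.span F (Set.range X)) :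
      q.IsHomogeneous 1 := by
    rwa [← homogeneousSubmodule_one_eq_span_X] at hq
  have hp' : p ∈ Submodule.span F (Set.range (X : Fin n → MvPolynomial (Fin n) F)) := by
    rw [← homogeneousSubmodule_one_eq_span_X]
    exact hp
  induction hp' using Submodule.span_induction with
  | mem p h =>
    obtain ⟨i, rfl⟩ := h
    exact ⟨LinearMap.proj i, fun x => by simp⟩
  | zero => exact ⟨0, fun x => by simp⟩
  | add p q hp' hq' ihp ihq =>
    obtain ⟨l, hl⟩ := ihp (hspan hp')
    obtain ⟨m, hm⟩ := ihq (hspan hq')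
    exact ⟨l + m, fun x => by simp [hl, hm]⟩
  | smul a p hp' ih =>
    obtain ⟨l, hl⟩ := ih (hspan hp')
    exact ⟨a • l, fun x => by simp [hl, smul_eval]⟩

lemma exists_eval_eq_affine_of_totalDegree_eq_one {F : Type*} [Field F] {n : ℕ}
    {p : MvPolynomial (Fin n) F} (hp : p.totalDegree = 1) :
    ∃ (c : F) (l : Module.Dual F (Fin n → F)), ∀ x, eval x p = c + l x := by
  obtain ⟨l, hl⟩ :=
    exists_eval_eq_linear_of_isHomogeneous_one (homogeneousComponent_isHomogeneous 1 p)
  refine ⟨coeff 0 p, l, fun x => ?_⟩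
  conv_lhs => rw [← sum_homogeneousComponent p, hp]
  simp [Finset.sum_range_succ, hl, homogeneousComponent_zero]

/-- A nonzero homogeneous quadratic polynomial that is not a product of two linear functionals is
irreducible. -/
lemma irreducible_of_not_mul {F : Type*} [Field F] (h2 : (2 : F) ≠ 0) {n : ℕ}
    {φ : MvPolynomial (Fin n) F} (hφ : φ.IsHomogeneous 2) (hne : φ ≠ 0)
    (h0 : eval 0 φ = 0) (hneg : ∀ x, eval (-x) φ = eval x φ)
    (h : ∀ l m : Module.Dual F (Fin n → F), ¬ ∀ x, eval x φ = l x * m x) : Irreducible φ := by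
  have hdeg := hφ.totalDegree hne
  have hunit : ∀ p : MvPolynomial (Fin n) F, p ≠ 0 → p.totalDegree = 0 → IsUnit p := by
    intro p hp hd
    rw [totalDegree_eq_zero_iff_eq_C] at hd
    rw [isUnit_iff_eq_C_of_isReduced]
    refine ⟨_, ?_, hd⟩
    rw [isUnit_iff_ne_zero]
    intro h0
    rw [h0, C_0] at hd
    exact hp hd
  refine ⟨fun hu => ?_, ?_⟩
  · rw [isUnit_iff_totalDegree_of_isReduced] at hu
    omega
  · rintro p q rfl
    have hp : p ≠ 0 := left_ne_zero_of_mul hne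
    have hq : q ≠ 0 := right_ne_zero_of_mul hne
    rw [totalDegree_mul_of_isDomain hp hq] at hdeg
    by_cases hp0 : p.totalDegree = 0
    · exact Or.inl (hunit p hp hp0)
    by_cases hq0 : q.totalDegree = 0
    · exact Or.inr (hunit q hq hq0)
    obtain ⟨c, l, hl⟩ := exists_eval_eq_affine_of_totalDegree_eq_one (p := p) (by omega)
    obtain ⟨d, m, hm⟩ := exists_eval_eq_affine_of_totalDegree_eq_one (p := q) (by omega)
    -- The product `(c + l) (d + m)` vanishes at `0` and is even, so it equals `l * m`.
    refine (h l m fun x => ?_).elim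
    have e0 : c * d = 0 := by
      rw [map_mul, hl, hm] at h0
      simpa using h0
    have e1 := hneg x
    simp only [map_mul, hl, hm, map_neg] at e1 ⊢
    apply mul_left_cancel₀ h2
    linear_combination 2 * e0 - e1

/-- Over a field with `2 ≠ 0`, a quadratic form is given in coordinates by a homogeneous
polynomial of degree `2`. -/
lemma exists_polynomial_of_quadraticForm {F V : Type*} [Field F] (h2 : (2 : F) ≠ 0)
    [AddCommGroup V] [Module F V] {n : ℕ} (b : Module.Basis (Fin n) F V) (Φ : QuadraticForm F V) :
    ∃ φ : MvPolynomial (Fin n) F, φ.IsHomogeneous 2 ∧ ∀ v, eval (b.equivFun v) φ = Φ v := by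
  refine ⟨∑ i, ∑ j, C (2⁻¹ * QuadraticMap.polarBilin Φ (b i) (b j)) * (X i * X j), ?_, ?_⟩
  · refine IsHomogeneous.sum _ _ _ fun i _ => IsHomogeneous.sum _ _ _ fun j _ => ?_
    exact ((isHomogeneous_X F i).mul (isHomogeneous_X F j)).C_mul _
  · intro v
    have h1 : QuadraticMap.polarBilin Φ v v = 2 * Φ v := by
      simp [QuadraticMap.polar_self]
    have h3 := LinearMap.sum_repr_mul_repr_mul (B := QuadraticMap.polarBilin Φ) b b v v
    rw [h1, Finsupp.sum_fintype _ _ (by simp)] at h3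
    apply mul_left_cancel₀ h2
    rw [← h3]
    simp only [map_sum, map_mul, eval_C, eval_X, Finset.mul_sum]
    refine Finset.sum_congr rfl fun i _ => ?_
    rw [Finsupp.sum_fintype _ _ (by simp)]
    refine Finset.sum_congr rfl fun j _ => ?_
    simp only [Module.Basis.equivFun_apply, smul_eq_mul]
    field_simp

/-- The linear form representing the functional `L` in the coordinates of the basis `b`. -/
noncomputable def dualPoly {F V : Type*} [Field F] [AddCommGroup V] [Module F V] {n : ℕ}
    (b : Module.Basis (Fin n) F V) (L : Module.Dual F V) : MvPolynomial (Fin n) F :=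
  ∑ i, C (L (b i)) * X i

lemma eval_dualPoly {F V : Type*} [Field F] [AddCommGroup V] [Module F V] {n : ℕ}
    (b : Module.Basis (Fin n) F V) (L : Module.Dual F V) (v : V) :
    eval (b.equivFun v) (dualPoly b L) = L v := by
  conv_rhs => rw [← b.sum_equivFun v]
  simp [dualPoly, mul_comm, -Module.Basis.sum_repr]

/-- The substitution on coordinate polynomials corresponding to the projection
`v ↦ v - L v • w`; when `L w = 1` this projects onto `ker L` along `w`. -/
noncomputable def restrictHom {F V : Type*} [Field F] [AddCommGroup V] [Module F V] {n : ℕ}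
    (b : Module.Basis (Fin n) F V) (L : Module.Dual F V) (w : V) :
    MvPolynomial (Fin n) F →ₐ[F] MvPolynomial (Fin n) F :=
  aeval fun i => X i - C (b.equivFun w i) * dualPoly b L

lemma eval_restrictHom {F V : Type*} [Field F] [AddCommGroup V] [Module F V] {n : ℕ}
    (b : Module.Basis (Fin n) F V) (L : Module.Dual F V) (w v : V) (p : MvPolynomial (Fin n) F) :
    eval (b.equivFun v) (restrictHom b L w p) = eval (b.equivFun (v - L v • w)) p := by
  induction p using MvPolynomial.induction_on with
  | C a => simp [restrictHom]
  | add p q hp hq => simp only [map_add, hp, hq]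
  | mul_X p i hp =>
    rw [map_mul, map_mul, map_mul, hp]
    congr 1
    simp only [restrictHom, aeval_X, map_sub, map_mul, eval_X, eval_C, eval_dualPoly, map_smul,
      Pi.sub_apply, Pi.smul_apply, smul_eq_mul]
    ring

lemma restrictHom_isHomogeneous {F V : Type*} [Field F] [AddCommGroup V] [Module F V] {n : ℕ}
    (b : Module.Basis (Fin n) F V) (L : Module.Dual F V) (w : V) {p : MvPolynomial (Fin n) F}
    {k : ℕ} (hp : p.IsHomogeneous k) : (restrictHom b L w p).IsHomogeneous k := by
  rw [← one_mul k]
  refine hp.aeval _ fun i => (isHomogeneous_X F i).sub (IsHomogeneous.C_mul ?_ _)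
  exact IsHomogeneous.sum _ _ _ fun j _ => (isHomogeneous_X F j).C_mul _

/-- The substitution is the identity modulo the linear form of `L`. -/
lemma sub_restrictHom_mem {F V : Type*} [Field F] [AddCommGroup V] [Module F V] {n : ℕ}
    (b : Module.Basis (Fin n) F V) (L : Module.Dual F V) (w : V) (I : Ideal (MvPolynomial (Fin n) F))
    (hI : dualPoly b L ∈ I) (p : MvPolynomial (Fin n) F) : p - restrictHom b L w p ∈ I := by
  induction p using MvPolynomial.induction_on with
  | C a => simp [restrictHom]
  | add p q hp hq =>
    rw [map_add, add_sub_add_comm]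
    exact I.add_mem hp hq
  | mul_X p i hp =>
    have : p * X i - restrictHom b L w (p * X i)
        = X i * (p - restrictHom b L w p)
          + restrictHom b L w p * C (b.equivFun w i) * dualPoly b L := by
      rw [map_mul]
      simp only [restrictHom, aeval_X]
      ring
    rw [this]
    exact I.add_mem (I.mul_mem_left _ hp) (I.mul_mem_left _ hI)

/-- The heart of the argument: a minimal prime over `(φ₁, φ₂)` contains no nonzero linear form. -/
lemma dualPoly_notMem_minimalPrimes {F V : Type*} [Field F] [IsAlgClosed F] (h2 : (2 : F) ≠ 0)
    [AddCommGroup V] [Module F V] [FiniteDimensional F V] (Φ₁ Φ₂ : QuadraticForm F V)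
    (hrank : ∀ r s : F, ¬(r = 0 ∧ s = 0) → 5 ≤ (r • Φ₁ + s • Φ₂).rank)
    {n : ℕ} (b : Module.Basis (Fin n) F V) {φ₁ φ₂ : MvPolynomial (Fin n) F}
    (hom₁ : φ₁.IsHomogeneous 2) (hom₂ : φ₂.IsHomogeneous 2)
    (ev₁ : ∀ v, eval (b.equivFun v) φ₁ = Φ₁ v) (ev₂ : ∀ v, eval (b.equivFun v) φ₂ = Φ₂ v)
    (P : Ideal (MvPolynomial (Fin n) F)) (hP : P ∈ (Ideal.span {φ₁, φ₂}).minimalPrimes)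
    (L : Module.Dual F V) (hL : L ≠ 0) : dualPoly b L ∉ P := by
  intro hLP
  have := hP.isPrime
  have : Infinite F := IsAlgClosed.instInfinite
  obtain ⟨w, hw⟩ : ∃ w, L w = 1 := LinearMap.surjective hL 1
  set ρ := restrictHom b L w with hρ
  have hφ₁P : φ₁ ∈ P := hP.1.2 (Ideal.subset_span (by simp))
  have hφ₂P : φ₂ ∈ P := hP.1.2 (Ideal.subset_span (by simp))
  have evρ : ∀ p v, L v = 0 → eval (b.equivFun v) (ρ p) = eval (b.equivFun v) p := by
    intro p v hv
    rw [hρ, eval_restrictHom, hv, zero_smul, sub_zero]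
  have hrank' : ∀ r s : F, ¬(r = 0 ∧ s = 0) → ∀ l m : Module.Dual F V,
      ¬ ∀ v, L v = 0 → (r • Φ₁ + s • Φ₂) v = l v * m v := by
    intro r s hrs l m h
    have := rank_le_four_of_eq_mul_on_ker _ L l m w hw h
    have := hrank r s hrs
    omega
  have hmul : ∀ l m : Module.Dual F (Fin n → F), ¬ ∀ x, eval x (ρ φ₁) = l x * m x := by
    intro l m h
    refine hrank' 1 0 (by simp) (l ∘ₗ b.equivFun.toLinearMap) (m ∘ₗ b.equivFun.toLinearMap) ?_
    intro v hv
    have hx := h (b.equivFun v)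
    rw [evρ _ v hv, ev₁] at hx
    simpa using hx
  have hρ₁ne : ρ φ₁ ≠ 0 := fun h0 => hmul 0 0 fun x => by simp [h0]
  have hirr : Irreducible (ρ φ₁) := by
    refine irreducible_of_not_mul h2 (restrictHom_isHomogeneous b L w hom₁) hρ₁ne ?_ ?_ hmul
    · have := eval_restrictHom b L w 0 φ₁
      rw [ev₁] at this
      simpa using this
    · intro x
      obtain ⟨v, rfl⟩ := b.equivFun.surjective x
      rw [← map_neg, hρ, eval_restrictHom, eval_restrictHom, ev₁, ev₁, ← QuadraticMap.map_neg]
      congr 1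
      rw [map_neg]
      module
  have hprime : Prime (ρ φ₁) := hirr.prime
  -- The chain `0 < K < Q < P` of primes; `K` is generated by the linear form of `L`, and
  -- `Q` by that linear form together with `φ₁`.
  let K : Ideal (MvPolynomial (Fin n) F) := RingHom.ker ρ
  let J : Ideal (MvPolynomial (Fin n) F) := Ideal.span {ρ φ₁}
  have hJ : J.IsPrime := (Ideal.span_singleton_prime hρ₁ne).2 hprime
  let Q : Ideal (MvPolynomial (Fin n) F) := J.comap ρ
  have : K.IsPrime := RingHom.ker_isPrime _
  have : Q.IsPrime := Ideal.comap_isPrime _ _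
  have hbot : (⊥ : Ideal (MvPolynomial (Fin n) F)) < K := by
    refine bot_lt_iff_ne_bot.2 ((Submodule.ne_bot_iff _).2 ⟨dualPoly b L, ?_, ?_⟩)
    · rw [RingHom.mem_ker]
      refine MvPolynomial.funext fun x => ?_
      obtain ⟨v, rfl⟩ := b.equivFun.surjective x
      rw [hρ, eval_restrictHom, eval_dualPoly]
      simp [hw]
    · intro h0
      have := eval_dualPoly b L w
      rw [h0, hw] at this
      simp at this
  have hKQ : K < Q := by
    refine lt_of_le_of_ne (fun p hp => ?_) fun h => ?_
    · rw [Ideal.mem_comap, RingHom.mem_ker.1 hp]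
      exact J.zero_mem
    · have : φ₁ ∈ K := h ▸ (Ideal.mem_comap.2 (Ideal.mem_span_singleton_self _))
      exact hρ₁ne (RingHom.mem_ker.1 this)
  have hQP : Q < P := by
    refine lt_of_le_of_ne (fun p hp => ?_) fun h => ?_
    · obtain ⟨g, hg⟩ := Ideal.mem_span_singleton.1 (Ideal.mem_comap.1 hp)
      have hρ₁P : ρ φ₁ ∈ P := by
        simpa using P.sub_mem hφ₁P (sub_restrictHom_mem b L w P hLP φ₁)
      have hρpP : ρ p ∈ P := hg ▸ P.mul_mem_right g hρ₁P
      exact (Submodule.sub_mem_iff_left P hρpP).1 (sub_restrictHom_mem b L w P hLP p)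
    · have hQ₂ : φ₂ ∈ Q := h ▸ hφ₂P
      obtain ⟨g, hg⟩ := Ideal.mem_span_singleton.1 (Ideal.mem_comap.1 hQ₂)
      -- By degrees the quotient `g` is a constant `c`, so `Φ₂ - c Φ₁` vanishes on `ker L`.
      have hgC : ∃ c, g = C c := by
        by_cases hg0 : g = 0
        · exact ⟨0, by simp [hg0]⟩
        have d₁ := (restrictHom_isHomogeneous b L w hom₁).totalDegree hρ₁ne
        have d₂ := (restrictHom_isHomogeneous b L w hom₂).totalDegree_le
        have d₃ := totalDegree_mul_of_isDomain hρ₁ne hg0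
        rw [← hg] at d₃
        rw [← hρ] at d₁ d₂
        exact ⟨_, totalDegree_eq_zero_iff_eq_C.1 (by omega)⟩
      obtain ⟨c, rfl⟩ := hgC
      refine hrank' (-c) 1 (by simp) 0 0 fun v hv => ?_
      have := congrArg (eval (b.equivFun v)) hg
      rw [map_mul, evρ _ v hv, evρ _ v hv, ev₁, ev₂, eval_C] at this
      simp [this, mul_comm]
  have c1 := Ideal.height_add_one_le_of_lt_of_isPrime hbot
  have c2 := Ideal.height_add_one_le_of_lt_of_isPrime hKQ
  have c3 := Ideal.height_add_one_le_of_lt_of_isPrime hQP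
  have c4 : P.height ≤ 2 :=
    (Ideal.height_le_card_of_mem_minimalPrimes_span (by simp) hP).trans
      (by exact_mod_cast Set.ncard_insert_le _ _ |>.trans (by simp))
  have c5 : (0 : ℕ∞) + 1 + 1 + 1 ≤ 2 := calc
    (0 : ℕ∞) + 1 + 1 + 1 ≤ (⊥ : Ideal (MvPolynomial (Fin n) F)).height + 1 + 1 + 1 := by
      gcongr; exact zero_le
    _ ≤ K.height + 1 + 1 := by gcongr
    _ ≤ Q.height + 1 := by gcongr
    _ ≤ P.height := c3
    _ ≤ 2 := c4
  exact absurd c5 (by norm_num)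

/-- Lemma `lem:intersec`: over an algebraically closed field `F` of characteristic `≠ 2`, if
`Φ₁, Φ₂` are quadratic forms on a finite-dimensional space `V` such that every form
`r • Φ₁ + s • Φ₂` with `r, s` not both zero has rank at least `5`, then the set of common
zeros of `Φ₁` and `Φ₂` is not contained in any finite union of hyperplanes (kernels of
nonzero linear functionals). -/
theorem common_zeros_not_in_finitely_many_hyperplanes
    (F : Type*) [Field F] [IsAlgClosed F] (h2 : (2 : F) ≠ 0)
    (V : Type*) [AddCommGroup V] [Module F V] [FiniteDimensional F V]
    (Φ₁ Φ₂ : QuadraticForm F V)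
    (hrank : ∀ r s : F, ¬(r = 0 ∧ s = 0) → 5 ≤ (r • Φ₁ + s • Φ₂).rank) :
    ∀ (t : Finset (Module.Dual F V)), (∀ L ∈ t, L ≠ 0) →
      ¬({v : V | Φ₁ v = 0 ∧ Φ₂ v = 0} ⊆ {v : V | ∃ L ∈ t, L v = 0}) := by
  intro t ht hsub
  obtain ⟨φ₁, hom₁, ev₁⟩ := exists_polynomial_of_quadraticForm h2 (Module.finBasis F V) Φ₁
  obtain ⟨φ₂, hom₂, ev₂⟩ := exists_polynomial_of_quadraticForm h2 (Module.finBasis F V) Φ₂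
  set b := Module.finBasis F V
  have hrad : (∏ L ∈ t, dualPoly b L) ∈ (Ideal.span {φ₁, φ₂}).radical := by
    rw [← vanishingIdeal_zeroLocus_eq_radical (K := F), zeroLocus_span]
    intro x hx
    obtain ⟨v, rfl⟩ := b.equivFun.surjective x
    have h₁ : Φ₁ v = 0 := by rw [← ev₁, ← hx φ₁ (by simp)]; rfl
    have h₂ : Φ₂ v = 0 := by rw [← ev₂, ← hx φ₂ (by simp)]; rfl
    obtain ⟨L, hLt, hLv⟩ := hsub ⟨h₁, h₂⟩
    rw [map_prod]
    refine Finset.prod_eq_zero hLt ?_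
    rw [← hLv]
    exact eval_dualPoly b L v
  -- The ideal is proper, because both polynomials vanish at the origin.
  have htop : Ideal.span {φ₁, φ₂} ≠ ⊤ := by
    have hle : Ideal.span {φ₁, φ₂} ≤ RingHom.ker (eval (b.equivFun (0 : V))) := by
      rw [Ideal.span_le]
      rintro p (rfl | rfl)
      · simpa using ev₁ 0
      · simpa using ev₂ 0
    intro h
    exact RingHom.ker_ne_top _ (top_le_iff.1 (h ▸ hle))
  obtain ⟨P, hP⟩ := Ideal.nonempty_minimalPrimes htop
  have := hP.isPrime
  obtain ⟨L, hLt, hLP⟩ := (Ideal.IsPrime.prod_mem_iff (p := P)).1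
    ((Ideal.IsPrime.radical_le_iff hP.isPrime).2 hP.1.2 hrad)
  exact dualPoly_notMem_minimalPrimes h2 Φ₁ Φ₂ hrank b hom₁ hom₂ ev₁ ev₂ P hP L (ht L hLt) hLP
end

section
/- Let K be a number field with algebraic closure K̄ and let σ ∈ Gal(K̄/K). Then the closed subgroup Gal(K̄/K̄^σ) of Gal(K̄/K) (equivalently, the closure in the Krull topology of the cyclic subgroup generated by σ) is isomorphic as a topological group either to the cyclic group ℤ/2ℤ or to a product ∏_{p ∈ S} ℤ_p of the rings of p-adic integers over some set S of prime numbers. -/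
/-!
Write `F = K̄^σ` and `G = Gal(K̄/F)`. By infinite Galois theory `σ` generates a dense subgroup
of `G`, so `G` is a commutative profinite group with one topological generator. Everything depends
on whether `G` has torsion.

*Torsion.* An automorphism `τ` of prime order `p` of an algebraically closed field of
characteristic zero has order two and sends a square root `i` of `-1` to `-i` (`artin_schreier`):
`τ` has an eigenvector `a` whose eigenvalue is a primitive `p`-th root of unity, and applying `τ`
repeatedly to a `p`-th root of `a` gives a contradiction unless `p = 2` and `τ i = -i`. The squares
of elements fixed by `τ` are then the nonnegative elements of an ordering of the fixed field of
`τ`. An automorphism `g` over `F` commuting with `τ` preserves this ordering and has finite orbits,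
so it is trivial on the fixed field of `τ`; hence `g ∈ {1, τ}` (`eq_one_or_eq_of_commute`). As `G`
is commutative, `G = {1, τ}`.

*No torsion.* Let `S` be the set of primes `p` such that `σ` is not a `p`-th power in `G`, and let
`Γ` be the closure in `G × ∏_{p ∈ S} ℤ_p` of the subgroup generated by `(σ, 1)`. Both projections
of `Γ` are surjective by compactness, as `1` generates a dense subgroup of `∏_{p ∈ S} ℤ_p` by the
Chinese remainder theorem. They are injective because, for `p ∈ S`, torsion-freeness makes `σ ^ m`
a `p ^ k`-th power only if `p ^ k ∣ m`, while the index of an open subgroup of `G` is divisible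
only by primes of `S`. So `Γ` is the graph of the required isomorphism (`procyclic_structure`).
-/

/-- The discrete topology on `ZMod 2`. -/
instance : TopologicalSpace (ZMod 2) := ⊥

/-! ### Automorphisms of finite order of an algebraically closed field -/

section Field
variable {F C : Type*} [Field F] [Field C] [Algebra F C]

/-- If `τ ξ = ξ ^ k`, then `k ^ p ≡ 1` modulo `p` because `τ ^ p = 1`, so `k ≡ 1` by Fermat. -/
theorem fixes_root_of_unity (τ : C ≃ₐ[F] C) {p : ℕ} (hp : p.Prime) (hτ : τ ^ p = 1)
    {ξ : C} (hξ : ξ ^ p = 1) : τ ξ = ξ := by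
  have := Fact.mk hp
  have : NeZero p := ⟨hp.ne_zero⟩
  by_cases h1 : ξ = 1
  · simp [h1]
  have hprim : IsPrimitiveRoot ξ p := by
    have := IsPrimitiveRoot.orderOf ξ
    rwa [orderOf_eq_prime hξ h1] at this
  obtain ⟨k, -, hk⟩ := hprim.eq_pow_of_pow_eq_one (ξ := τ ξ) (by rw [← map_pow, hξ, map_one])
  have hpow : ∀ n : ℕ, (τ ^ n) ξ = ξ ^ k ^ n := by
    intro n
    induction n with
    | zero => simp
    | succ n ih => rw [pow_succ', AlgEquiv.mul_apply, ih, map_pow, ← hk, ← pow_mul, pow_succ']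
  have hmod : ∀ n : ℕ, ξ ^ n = ξ ↔ n ≡ 1 [MOD p] := by
    intro n
    have h0 := (isOfFinOrder_iff_pow_eq_one.2 ⟨p, hp.pos, hξ⟩).pow_eq_pow_iff_modEq
      (n := n) (m := 1)
    rwa [pow_one, ← hprim.eq_orderOf] at h0
  have h3 : k ^ p ≡ 1 [MOD p] := (hmod _).1 (by rw [← hpow p, hτ]; simp)
  have h4 : k ≡ 1 [MOD p] := by
    rw [← ZMod.natCast_eq_natCast_iff] at h3 ⊢
    push_cast at h3
    rw [ZMod.pow_card] at h3
    simpa using h3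
  rw [← hk, hmod]
  exact h4

/-- Every `p`-th root of unity `ζ` is an eigenvalue of an automorphism `τ` of prime order `p`: the
Lagrange resolvent `∑ i < p, ζ⁻¹ ^ i * τ ^ i x` is an eigenvector, and it is nonzero for some `x`
because the powers of `τ` are linearly independent. -/
theorem exists_eigenvector (τ : C ≃ₐ[F] C) {p : ℕ} (hp : p.Prime) (hτ : τ ^ p = 1)
    (hne : τ ≠ 1) {ζ : C} (hζ : ζ ^ p = 1) : ∃ a : C, a ≠ 0 ∧ τ a = ζ * a := by
  have := Fact.mk hp
  have hζ0 : ζ ≠ 0 := by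
    rintro rfl
    simp [hp.ne_zero] at hζ
  have hord : orderOf τ = p := orderOf_eq_prime hτ hne
  have hli : LinearIndependent C (fun i : Fin p => (fun x : C => (τ ^ (i : ℕ)) x)) := by
    refine (linearIndependent_monoidHom C C).comp
      (fun i : Fin p => ((τ ^ (i : ℕ) : C ≃ₐ[F] C) : C →* C)) ?_
    intro i j hij
    have h : τ ^ (i : ℕ) = τ ^ (j : ℕ) := by
      ext x
      exact DFunLike.congr_fun hij x
    exact Fin.ext (pow_injOn_Iio_orderOf (by simp [hord]) (by simp [hord]) h)
  have hx : ∃ x : C, ∑ i ∈ Finset.range p, ζ⁻¹ ^ i * (τ ^ i) x ≠ 0 := by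
    by_contra! hcon
    have := (Fintype.linearIndependent_iff.1 hli) (fun i => ζ⁻¹ ^ (i : ℕ)) (by
      funext x
      simpa [Finset.sum_apply, Finset.sum_range] using hcon x) ⟨0, hp.pos⟩
    simp at this
  obtain ⟨x, hx⟩ := hx
  refine ⟨_, hx, ?_⟩
  have hshift := (Finset.sum_range_succ' (fun i => ζ⁻¹ ^ i * (τ ^ i) x) p).symm.trans
    (Finset.sum_range_succ (fun i => ζ⁻¹ ^ i * (τ ^ i) x) p)
  have hend : ζ⁻¹ ^ p * (τ ^ p) x = ζ⁻¹ ^ 0 * (τ ^ 0) x := by simp [hτ, hζ]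
  rw [hend] at hshift
  conv_rhs => rw [← add_right_cancel hshift]
  rw [map_sum, Finset.mul_sum]
  refine Finset.sum_congr rfl fun i _ => ?_
  have hz : τ ζ = ζ := fixes_root_of_unity τ hp hτ hζ
  rw [map_mul, map_pow, map_inv₀, hz, pow_succ' τ, AlgEquiv.mul_apply, pow_succ']
  field_simp

/-- The part of the Artin–Schreier theorem on finite subgroups of Galois groups that concerns
automorphisms of prime order. -/
theorem artin_schreier [IsAlgClosed C] [CharZero C] (τ : C ≃ₐ[F] C) {p : ℕ} (hp : p.Prime)
    (hτ : τ ^ p = 1) (hne : τ ≠ 1) : τ ^ 2 = 1 ∧ ∃ i : C, i ^ 2 = -1 ∧ τ i = -i := by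
  have := Fact.mk hp
  have : NeZero (p : C) := ⟨by exact_mod_cast hp.ne_zero⟩
  obtain ⟨ζ, hζ⟩ := HasEnoughRootsOfUnity.exists_primitiveRoot C p
  obtain ⟨a, ha0, ha⟩ := exists_eigenvector τ hp hτ hne hζ.pow_eq_one
  -- For `c ^ p = a`, write `τ c = η * c` and `τ η = η * ξ`; here `η ^ p = ζ` and `ξ ^ p = 1`, so
  -- `τ ^ n` multiplies `c` by `η ^ n * ξ ^ (0 + 1 + ⋯ + (n - 1))`. Take `n = p`.
  obtain ⟨c, hc⟩ := IsAlgClosed.exists_pow_nat_eq a hp.pos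
  have hc0 : c ≠ 0 := by
    rintro rfl
    exact ha0 (by rw [← hc, zero_pow hp.ne_zero])
  have hτ0 : τ c ≠ 0 := by simpa using hc0
  obtain ⟨η, hη⟩ : ∃ η, η = τ c / c := ⟨_, rfl⟩
  have hη0 : η ≠ 0 := by rw [hη]; exact div_ne_zero hτ0 hc0
  have hτc : τ c = η * c := by rw [hη]; field_simp
  have hηp : η ^ p = ζ := by
    rw [hη, div_pow, ← map_pow, hc, ha]
    field_simp
  obtain ⟨ξ, hξ⟩ : ∃ ξ, ξ = τ η / η := ⟨_, rfl⟩
  have hτη : τ η = η * ξ := by rw [hξ]; field_simp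
  have hξp : ξ ^ p = 1 := by
    rw [hξ, div_pow, ← map_pow, hηp, fixes_root_of_unity τ hp hτ hζ.pow_eq_one]
    exact div_self (hζ.ne_zero hp.ne_zero)
  have hτξ : τ ξ = ξ := fixes_root_of_unity τ hp hτ hξp
  have hiter : ∀ n : ℕ, (τ ^ n) c = η ^ n * ξ ^ (∑ i ∈ Finset.range n, i) * c := by
    intro n
    induction n with
    | zero => simp
    | succ n ih =>
      rw [pow_succ', AlgEquiv.mul_apply, ih, map_mul, map_mul, map_pow, map_pow, hτξ, hτη, hτc,
        Finset.sum_range_succ]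
      ring
  have hper : ζ * ξ ^ (∑ i ∈ Finset.range p, i) = 1 := by
    have := hiter p
    rw [hτ, hηp, AlgEquiv.one_apply] at this
    exact (mul_right_cancel₀ hc0 (by rw [one_mul]; exact this)).symm
  obtain rfl | hodd := hp.eq_two_or_odd'
  · refine ⟨hτ, η, ?_, ?_⟩
    · rw [hηp]
      exact hζ.eq_neg_one_of_two_right
    · have hz : ζ = -1 := hζ.eq_neg_one_of_two_right
      rw [hz] at hper
      simp [Finset.sum_range_succ] at hper
      rw [hτη, show ξ = -1 by linear_combination -hper]
      ring
  · exfalso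
    have hdvd : p ∣ ∑ i ∈ Finset.range p, i := by
      have h2 := Finset.sum_range_id_mul_two p
      have : p ∣ (∑ i ∈ Finset.range p, i) * 2 := ⟨_, h2⟩
      exact (Nat.Coprime.dvd_mul_right (by simpa using hodd)).1 this
    obtain ⟨t, ht⟩ := hdvd
    rw [ht, pow_mul, hξp, one_pow, mul_one] at hper
    exact hζ.ne_one hp.one_lt hper

/-- The only automorphisms over `F` commuting with an involution `τ` that moves a square root of
`-1` are `1` and `τ`: the fixed field of `τ` is ordered by its squares, and an order-preserving
automorphism with finite orbits is trivial. -/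
theorem eq_one_or_eq_of_commute [IsAlgClosed C] [CharZero C] [Algebra.IsAlgebraic F C]
    (τ : C ≃ₐ[F] C) (h2 : τ ^ 2 = 1) {i : C} (hi : i ^ 2 = -1) (hτi : τ i = -i)
    (g : C ≃ₐ[F] C) (hg : g * τ = τ * g) : g = 1 ∨ g = τ := by
  have hττ : ∀ x, τ (τ x) = x := fun x => by
    rw [← AlgEquiv.mul_apply, ← pow_two, h2, AlgEquiv.one_apply]
  have hcomm : ∀ x, g (τ x) = τ (g x) := fun x => DFunLike.congr_fun hg x
  have hi0 : i ≠ 0 := by rintro rfl; simp at hi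
  have h20 : (2 : C) ≠ 0 := two_ne_zero
  -- `P` is the positive cone of the fixed field of `τ`
  let P : C → Prop := fun x => ∃ r, τ r = r ∧ x = r ^ 2
  have hadd : ∀ x y, P x → P y → P (x + y) := by
    rintro _ _ ⟨a, ha, rfl⟩ ⟨b, hb, rfl⟩
    obtain ⟨c, hc⟩ := IsAlgClosed.exists_pow_nat_eq (a + i * b) two_pos
    -- with `c ^ 2 = a + i * b`, the sum `a ^ 2 + b ^ 2` is the square of the norm `c * τ c`
    refine ⟨c * τ c, by rw [map_mul, hττ, mul_comm], ?_⟩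
    have : (τ c) ^ 2 = a - i * b := by
      rw [← map_pow, hc, map_add, map_mul, ha, hb, hτi]; ring
    rw [mul_pow, hc, this]
    linear_combination (b ^ 2) * hi
  have hanti : ∀ x, P x → P (-x) → x = 0 := by
    rintro x ⟨r, hr, rfl⟩ ⟨s, hs, hsr⟩
    by_contra h0
    have hr0 : r ≠ 0 := by rintro rfl; simp at h0
    have h : (s - i * r) * (s + i * r) = 0 := by linear_combination -hsr - r ^ 2 * hi
    have key : ∀ j : C, τ j = -j → j ≠ 0 → s = j * r → False := by
      intro j hj hj0 hsj
      have h' : s = -j * r := by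
        have := congrArg τ hsj
        rwa [map_mul, hs, hr, hj] at this
      have : 2 * (j * r) = 0 := by linear_combination h' - hsj
      simp [hj0, hr0] at this
    rcases mul_eq_zero.1 h with h | h
    · exact key i hτi hi0 (by linear_combination h)
    · exact key (-i) (by rw [map_neg, hτi]) (neg_ne_zero.2 hi0) (by linear_combination h)
  have htot : ∀ x, τ x = x → P x ∨ P (-x) := by
    intro x hx
    obtain ⟨y, hy⟩ := IsAlgClosed.exists_pow_nat_eq x two_pos
    have h : (τ y - y) * (τ y + y) = 0 := by
      have : (τ y) ^ 2 = y ^ 2 := by rw [← map_pow, hy, hx]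
      linear_combination this
    rcases mul_eq_zero.1 h with h | h
    · exact Or.inl ⟨y, sub_eq_zero.1 h, hy.symm⟩
    · refine Or.inr ⟨i * y, ?_, ?_⟩
      · rw [map_mul, hτi, eq_neg_of_add_eq_zero_left h]; ring
      · rw [mul_pow, hi, hy]; ring
  have hgP : ∀ x, P x → P (g x) := by
    rintro _ ⟨r, hr, rfl⟩
    exact ⟨g r, by rw [← hcomm, hr], by rw [map_pow]⟩
  have h0P : P 0 := ⟨0, by simp, by simp⟩
  have hfin : ∀ x, ∃ n : ℕ, (g ^ (n + 1)) x = x := by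
    intro x
    have hmaps : ∀ n : ℕ, (g ^ n) x ∈ ((minpoly F x).rootSet C) := by
      intro n
      rw [Polynomial.mem_rootSet]
      refine ⟨minpoly.ne_zero (Algebra.IsIntegral.isIntegral x), ?_⟩
      have := Polynomial.aeval_algHom_apply (g ^ n : C ≃ₐ[F] C) x (minpoly F x)
      rw [minpoly.aeval, map_zero] at this
      exact this
    obtain ⟨m, n, hmn, he⟩ := Set.Finite.exists_lt_map_eq_of_forall_mem hmaps
      (Polynomial.rootSet_finite _ _)
    obtain ⟨d, rfl⟩ := Nat.exists_eq_add_of_lt hmn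
    refine ⟨d, (g ^ m).injective ?_⟩
    rw [he, ← AlgEquiv.mul_apply, ← pow_add, add_assoc]
  -- `g` preserves the ordering, so `x ≤ g x` gives `g x ≤ g ^ (n + 1) x = x`
  have hmono : ∀ x, P (g x - x) → g x = x := by
    intro x hx
    have hit : ∀ n : ℕ, P ((g ^ (n + 1)) x - g x) := by
      intro n
      induction n with
      | zero => simpa using h0P
      | succ n ih =>
        have := hadd _ _ (hgP _ ih) (hgP _ hx)
        rwa [map_sub, ← AlgEquiv.mul_apply, ← pow_succ', map_sub, sub_add_sub_cancel] at this
    obtain ⟨n, hn⟩ := hfin x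
    have h1 := hit n
    rw [hn, ← neg_sub] at h1
    exact sub_eq_zero.1 (hanti _ hx h1)
  have hfix : ∀ x, τ x = x → g x = x := by
    intro x hx
    rcases htot (g x - x) (by rw [map_sub, ← hcomm, hx]) with h | h
    · exact hmono x h
    · have := hmono (-x) (by rw [map_neg]; convert h using 1; ring)
      simpa using this
  -- `x = u + i * v` with `u` and `v` fixed by `τ`
  have hdec : ∀ x, x = (x + τ x) / 2 + i * ((x - τ x) / (2 * i)) := by
    intro x; field_simp; ring
  have hre : ∀ x, τ ((x + τ x) / 2) = (x + τ x) / 2 := by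
    intro x; rw [map_div₀, map_add, hττ, map_ofNat, add_comm]
  have him : ∀ x, τ ((x - τ x) / (2 * i)) = (x - τ x) / (2 * i) := by
    intro x; rw [map_div₀, map_sub, hττ, map_mul, map_ofNat, hτi]; field_simp; ring
  have hgi : (g i - i) * (g i + i) = 0 := by
    have : (g i) ^ 2 = -1 := by rw [← map_pow, hi, map_neg, map_one]
    linear_combination this - hi
  rcases mul_eq_zero.1 hgi with h | h
  · left
    ext x
    rw [AlgEquiv.one_apply]
    conv_lhs => rw [hdec x]
    conv_rhs => rw [hdec x]
    rw [map_add, map_mul, hfix _ (hre x), hfix _ (him x), sub_eq_zero.1 h]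
  · right
    ext x
    conv_lhs => rw [hdec x]
    conv_rhs => rw [hdec x]
    rw [map_add, map_mul, hfix _ (hre x), hfix _ (him x), map_add, map_mul, hre, him, hτi,
      eq_neg_of_add_eq_zero_left h]
end Field

/-! ### Products of rings of p-adic integers -/

section PadicProducts

theorem factPrimesVal (S : Set Nat.Primes) (p : S) : Fact (p.1.1.Prime) := ⟨p.1.2⟩

attribute [local instance] factPrimesVal

/-- The product `∏_{p ∈ S} ℤ_p` of additive groups, written multiplicatively. -/
abbrev PadicProd (S : Set Nat.Primes) : Type := ∀ p : S, Multiplicative ℤ_[p.1.1]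

/-- The element of `∏_{p ∈ S} ℤ_p` all of whose coordinates are `1`. -/
noncomputable def PadicProd.gen (S : Set Nat.Primes) : PadicProd S :=
  fun _ => Multiplicative.ofAdd 1

theorem PadicProd.gen_zpow (S : Set Nat.Primes) (m : ℤ) (p : S) :
    ((PadicProd.gen S) ^ m) p = Multiplicative.ofAdd (m : ℤ_[p.1.1]) := by
  rw [Pi.pow_apply, PadicProd.gen, ← ofAdd_zsmul, zsmul_one]

theorem isClosed_padic_dvd (p : ℕ) [Fact p.Prime] (k : ℕ) (a : ℤ_[p]) :
    IsClosed {z : ℤ_[p] | (p : ℤ_[p]) ^ k ∣ z - a} := by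
  have : {z : ℤ_[p] | (p : ℤ_[p]) ^ k ∣ z - a} =
      (fun z => ‖z - a‖) ⁻¹' Set.Iic ((p : ℝ) ^ (-(k : ℤ))) := by
    ext z
    simp only [Set.mem_ofPred_eq, Set.mem_preimage, Set.mem_Iic]
    rw [PadicInt.norm_le_pow_iff_mem_span_pow, Ideal.mem_span_singleton]
  rw [this]
  exact isClosed_Iic.preimage (by fun_prop)

/-- By the Chinese remainder theorem, an integer can approximate finitely many coordinates at
once. -/
theorem PadicProd.dense_gen (S : Set Nat.Primes) :
    Dense (Subgroup.zpowers (PadicProd.gen S) : Set (PadicProd S)) := by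
  classical
  rw [dense_iff_inter_open]
  rintro U hU ⟨z, hz⟩
  obtain ⟨I, u, hu, hIU⟩ := isOpen_pi_iff.1 hU z hz
  have hk : ∀ p : S, ∃ k : ℕ, p ∈ I → ∀ w : ℤ_[p.1.1], (p.1.1 : ℤ_[p.1.1]) ^ k ∣
      w - (z p).toAdd → Multiplicative.ofAdd w ∈ u p := by
    intro p
    by_cases hp : p ∈ I
    · have ho : IsOpen (Multiplicative.ofAdd ⁻¹' u p : Set ℤ_[p.1.1]) :=
        (hu p hp).1.preimage continuous_ofAdd
      obtain ⟨ε, hε, hball⟩ := Metric.isOpen_iff.1 ho (z p).toAdd (hu p hp).2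
      obtain ⟨k, hk⟩ := PadicInt.exists_pow_neg_lt p.1.1 hε
      refine ⟨k, fun _ w hw => ?_⟩
      suffices hw' : w ∈ Metric.ball (z p).toAdd ε from hball hw'
      rw [Metric.mem_ball, dist_eq_norm]
      refine lt_of_le_of_lt ?_ hk
      rwa [PadicInt.norm_le_pow_iff_mem_span_pow, Ideal.mem_span_singleton]
    · exact ⟨0, fun h => absurd h hp⟩
  choose k hk using hk
  obtain ⟨m, hm⟩ := Nat.chineseRemainderOfFinset (fun p : S => ((z p).toAdd.appr (k p)))
    (fun p : S => p.1.1 ^ k p) I (fun p _ => pow_ne_zero _ p.1.2.ne_zero) (by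
      intro p _ q _ hpq
      refine Nat.coprime_pow_primes _ _ p.1.2 q.1.2 ?_
      intro h
      exact hpq (Subtype.ext (Subtype.ext h)))
  refine ⟨PadicProd.gen S ^ (m : ℤ), hIU ?_, ⟨(m : ℤ), rfl⟩⟩
  intro p hp
  rw [PadicProd.gen_zpow]
  refine hk p hp _ ?_
  have h1 := PadicInt.appr_spec (k p) (z p).toAdd
  rw [Ideal.mem_span_singleton] at h1
  have h2 : ((p.1.1 : ℤ_[p.1.1])) ^ k p ∣ ((m : ℤ) : ℤ_[p.1.1]) -
      (((z p).toAdd.appr (k p) : ℕ) : ℤ_[p.1.1]) := by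
    have h3 := (Nat.modEq_iff_dvd.1 (hm p hp).symm)
    have h4 := (PadicInt.pow_p_dvd_int_iff (p := p.1.1) (k p) _).2 (by exact_mod_cast h3)
    simpa using h4
  have := dvd_sub h2 h1
  convert this using 1
  ring

/-! ### Procyclic groups without torsion -/

/-- A torsion-free profinite group with a topological generator is a product of rings `ℤ_p`, for
pairwise distinct primes `p`. -/
theorem procyclic_structure {G : Type*} [CommGroup G] [TopologicalSpace G] [IsTopologicalGroup G]
    [CompactSpace G] [T2Space G] [TotallyDisconnectedSpace G] (σ : G)
    (hσ : Dense (Subgroup.zpowers σ : Set G))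
    (htf : ∀ p : ℕ, p.Prime → ∀ g : G, g ^ p = 1 → g = 1) :
    ∃ (S : Set Nat.Primes) (e : G ≃* PadicProd S), Continuous e ∧ Continuous e.symm := by
  have hdense : ∀ A : Set G, IsClosed A → (∀ m : ℤ, σ ^ m ∈ A) → ∀ g, g ∈ A := by
    intro A hA h g
    have : closure (Subgroup.zpowers σ : Set G) ⊆ A :=
      hA.closure_subset_iff.2 (by rintro _ ⟨m, rfl⟩; exact h m)
    exact this (hσ g)
  have hpowcl : ∀ n : ℕ, IsClosed (Set.range fun g : G => g ^ n) := fun n =>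
    (isCompact_range (continuous_pow n)).isClosed
  have htf' : ∀ p : ℕ, p.Prime → ∀ k : ℕ, ∀ g h : G, g ^ p ^ k = h ^ p ^ k → g = h := by
    intro p hp k
    induction k with
    | zero => intro g h hgh; simpa using hgh
    | succ k ih =>
      intro g h hgh
      refine ih _ _ ?_
      rw [pow_succ, pow_mul, pow_mul] at hgh
      exact div_eq_one.1 (htf p hp _ (by rw [div_pow, hgh, div_self']))
  let S : Set Nat.Primes := {p | ∀ g : G, g ^ p.1 ≠ σ}
  have hS : ∀ p ∈ S, ∀ (k : ℕ) (m : ℤ) (g : G), g ^ p.1 ^ k = σ ^ m → ((p.1 ^ k : ℕ) : ℤ) ∣ m := by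
    intro p hp k
    induction k with
    | zero => intro m g _; simp
    | succ k ih =>
      intro m g hg
      obtain ⟨m', rfl⟩ := ih m (g ^ p.1) (by rw [← pow_mul, ← pow_succ', hg])
      have h1 : g ^ p.1 = σ ^ m' := by
        refine htf' p.1 p.2 k _ _ ?_
        rw [← pow_mul, ← pow_succ', hg, mul_comm, zpow_mul, zpow_natCast]
      have h2 : (p.1 : ℤ) ∣ m' := by
        by_contra hnd
        have hcop : IsCoprime (p.1 : ℤ) m' :=
          (Prime.coprime_iff_not_dvd (Nat.prime_iff_prime_int.1 p.2)).2 hnd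
        obtain ⟨a, b, hab⟩ := hcop
        refine hp (σ ^ a * g ^ b) ?_
        rw [mul_pow, ← zpow_natCast (g ^ b), ← zpow_mul, mul_comm b, zpow_mul, zpow_natCast, h1,
          ← zpow_mul, ← zpow_natCast, ← zpow_mul, ← zpow_add, mul_comm m', hab, zpow_one]
      obtain ⟨c, rfl⟩ := h2
      exact ⟨c, by push_cast; ring⟩
  -- if `x ↦ x ^ p` is surjective on `G`, it is injective on each finite quotient, whose order is
  -- therefore prime to `p`
  have hidx : ∀ U : Subgroup G, IsOpen (U : Set G) → ∀ p : Nat.Primes, p.1 ∣ U.index → p ∈ S := by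
    intro U hU p hpU g hg
    have : Finite (G ⧸ U) := U.quotient_finite_of_isOpen hU
    have := Fact.mk p.2
    have hsurj : Function.Surjective (fun x : G => x ^ p.1) := by
      intro x
      refine hdense _ (hpowcl p.1) (fun m => ⟨g ^ m, ?_⟩) x
      simp only
      rw [← zpow_natCast, ← zpow_mul, mul_comm, zpow_mul, zpow_natCast, hg]
    have hsurj' : Function.Surjective (fun x : G ⧸ U => x ^ p.1) := by
      intro x
      obtain ⟨x, rfl⟩ := QuotientGroup.mk_surjective x
      obtain ⟨y, rfl⟩ := hsurj x
      exact ⟨(y : G ⧸ U), rfl⟩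
    have hinj := Finite.injective_iff_surjective.2 hsurj'
    obtain ⟨x, hx⟩ := exists_prime_orderOf_dvd_card' (G := G ⧸ U) p.1 hpU
    have : x = 1 := hinj (by simp only [one_pow]; rw [← hx, pow_orderOf_eq_one])
    rw [this, orderOf_one] at hx
    exact p.2.one_lt.ne hx
  refine ⟨S, ?_⟩
  let Γ : Subgroup (G × PadicProd S) :=
    (Subgroup.zpowers ((σ, PadicProd.gen S) : G × PadicProd S)).topologicalClosure
  have hΓcl : IsClosed (Γ : Set (G × PadicProd S)) := Subgroup.isClosed_topologicalClosure _
  have hΓmem : ∀ m : ℤ, (σ ^ m, PadicProd.gen S ^ m) ∈ Γ := fun m =>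
    Subgroup.le_topologicalClosure _ ⟨m, rfl⟩
  have hΓ : ∀ A : Set (G × PadicProd S), IsClosed A →
      (∀ m : ℤ, (σ ^ m, PadicProd.gen S ^ m) ∈ A) → ∀ x ∈ Γ, x ∈ A := by
    intro A hA h x hx
    have : closure (Subgroup.zpowers ((σ, PadicProd.gen S) : G × PadicProd S) : Set _) ⊆ A :=
      hA.closure_subset_iff.2 (by rintro _ ⟨m, rfl⟩; exact h m)
    exact this hx
  have : ∀ p : S, CompactSpace (Multiplicative ℤ_[p.1.1]) := fun p =>
    inferInstanceAs (CompactSpace ℤ_[p.1.1])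
  have : CompactSpace Γ := isCompact_iff_compactSpace.1 hΓcl.isCompact
  let f : Γ →* G := (MonoidHom.fst _ _).comp Γ.subtype
  let h : Γ →* PadicProd S := (MonoidHom.snd _ _).comp Γ.subtype
  have hfc : Continuous f := continuous_fst.comp continuous_subtype_val
  have hhc : Continuous h := continuous_snd.comp continuous_subtype_val
  have hfs : Function.Surjective f :=
    hdense (Set.range f) (isCompact_range hfc).isClosed fun m => ⟨⟨_, hΓmem m⟩, rfl⟩
  have hhs : Function.Surjective h := by
    intro z
    have : closure (Subgroup.zpowers (PadicProd.gen S) : Set (PadicProd S)) ⊆ Set.range h :=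
      (isCompact_range hhc).isClosed.closure_subset_iff.2
        (by rintro _ ⟨m, rfl⟩; exact ⟨⟨_, hΓmem m⟩, rfl⟩)
    exact this (PadicProd.dense_gen S z)
  have hfi : Function.Injective f := by
    rw [injective_iff_map_eq_one]
    rintro ⟨⟨g, z⟩, hx⟩ (hg : g = 1)
    subst hg
    suffices z = 1 by subst this; rfl
    funext p
    have hdvd : ∀ k : ℕ, (p.1.1 : ℤ_[p.1.1]) ^ k ∣ (z p).toAdd := by
      intro k
      have hpk : 0 < p.1.1 ^ k := pow_pos p.1.2.pos k
      -- The pairs `(x, y)` with `x ∈ σ ^ m * G ^ (p ^ k)` and `y p ≡ m` modulo `p ^ k` for some `m`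
      -- form a closed set, since finitely many `m` suffice; hence it contains `Γ`.
      have hmem := hΓ (⋃ m ∈ Finset.range (p.1.1 ^ k),
        ((fun x : G × PadicProd S => x.1 / σ ^ m) ⁻¹' (Set.range fun g : G => g ^ p.1.1 ^ k)) ∩
        ((fun x : G × PadicProd S => (x.2 p).toAdd) ⁻¹'
          {w | (p.1.1 : ℤ_[p.1.1]) ^ k ∣ w - (m : ℕ)})) ?_ ?_ _ hx
      · simp only [Set.mem_iUnion] at hmem
        obtain ⟨m, -, ⟨g, hg⟩, hm⟩ := hmem
        have h1 := hS p.1 p.2 k m g⁻¹ (by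
          simp only at hg
          rw [inv_pow, hg, one_div, inv_inv, zpow_natCast])
        have h2 := (PadicInt.pow_p_dvd_int_iff (p := p.1.1) k m).2 (by exact_mod_cast h1)
        have h3 : (p.1.1 : ℤ_[p.1.1]) ^ k ∣ (z p).toAdd - (m : ℕ) := hm
        have := dvd_add h3 h2
        simpa using this
      · refine isClosed_biUnion_finset fun m _ => IsClosed.inter ?_ ?_
        · exact (hpowcl _).preimage (by fun_prop)
        · refine (isClosed_padic_dvd p.1.1 k _).preimage ?_
          exact continuous_toAdd.comp ((continuous_apply p).comp continuous_snd)
      · intro m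
        have hpk' : ((p.1.1 ^ k : ℕ) : ℤ) ≠ 0 := by exact_mod_cast hpk.ne'
        obtain ⟨r, hr⟩ := Int.eq_ofNat_of_zero_le (Int.emod_nonneg m hpk')
        have hrm : m = r + ((p.1.1 ^ k : ℕ) : ℤ) * (m / ((p.1.1 ^ k : ℕ) : ℤ)) := by
          rw [← hr]; exact (Int.emod_add_mul_ediv _ _).symm
        have hrlt : r < p.1.1 ^ k := by
          have := Int.emod_lt_of_pos m (by exact_mod_cast hpk : (0 : ℤ) < ((p.1.1 ^ k : ℕ) : ℤ))
          rw [hr] at this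
          exact_mod_cast this
        generalize m / ((p.1.1 ^ k : ℕ) : ℤ) = q at hrm
        simp only [Set.mem_iUnion]
        refine ⟨r, Finset.mem_range.2 hrlt, ⟨σ ^ q, ?_⟩, ?_⟩
        · simp only
          rw [hrm, zpow_add, zpow_natCast, mul_div_cancel_left, mul_comm, zpow_mul, zpow_natCast]
        · simp only [Set.mem_preimage, Set.mem_ofPred_eq, PadicProd.gen_zpow, toAdd_ofAdd]
          rw [hrm]
          exact ⟨q, by push_cast; ring⟩
    have h0 : (z p).toAdd = 0 := by
      by_contra hne
      have hpos := norm_pos_iff.2 hne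
      obtain ⟨k, hk⟩ := PadicInt.exists_pow_neg_lt p.1.1 hpos
      refine absurd hk (not_lt.2 ?_)
      rw [PadicInt.norm_le_pow_iff_mem_span_pow, Ideal.mem_span_singleton]
      exact hdvd k
    exact h0
  have hhi : Function.Injective h := by
    rw [injective_iff_map_eq_one]
    rintro ⟨⟨g, z⟩, hx⟩ (hz : z = 1)
    subst hz
    suffices g = 1 by subst this; rfl
    by_contra hg
    obtain ⟨U, hU⟩ := ProfiniteGrp.exist_openNormalSubgroup_sub_open_nhds_of_one
      (isOpen_compl_singleton (x := g)) (by simpa using Ne.symm hg)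
    have hUo : IsOpen (U.toSubgroup : Set G) := U.isOpen'
    have hUc : IsClosed (U.toSubgroup : Set G) := Subgroup.isClosed_of_isOpen _ hUo
    have : Finite (G ⧸ U.toSubgroup) := U.toSubgroup.quotient_finite_of_isOpen hUo
    have hn0 : U.toSubgroup.index ≠ 0 := Subgroup.index_ne_zero_of_finite
    have hσn : ∀ x : G, x ^ U.toSubgroup.index ∈ U.toSubgroup := fun x =>
      Subgroup.pow_index_mem _ x
    have hidxU := hidx _ hUo
    generalize U.toSubgroup.index = n at hn0 hσn hidxU
    -- The pairs `(x, y)` with `x ∈ σ ^ m * U` and `y p ≡ m` modulo the `p`-part of the index `n` of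
    -- `U`, for some `m` and all `p ∈ S`, form a closed set, which therefore contains `Γ`.
    have hmem := hΓ (⋃ m ∈ Finset.range n,
        ((fun x : G × PadicProd S => x.1 / σ ^ m) ⁻¹' (U.toSubgroup : Set G)) ∩
        (⋂ p : S, ⋂ k : ℕ, ⋂ _ : p.1.1 ^ k ∣ n, (fun x : G × PadicProd S => (x.2 p).toAdd) ⁻¹'
          {w | (p.1.1 : ℤ_[p.1.1]) ^ k ∣ w - (m : ℕ)})) ?_ ?_ _ hx
    · simp only [Set.mem_iUnion, Set.mem_inter_iff, Set.mem_iInter] at hmem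
      obtain ⟨m, -, hgm, hm⟩ := hmem
      have hnm : n ∣ m := by
        rw [Nat.dvd_iff_prime_pow_dvd_dvd]
        intro p k hp hpk
        rcases Nat.eq_zero_or_pos k with rfl | hk
        · simp
        have hpS : (⟨p, hp⟩ : Nat.Primes) ∈ S :=
          hidxU ⟨p, hp⟩ ((dvd_pow_self p hk.ne').trans hpk)
        have h1 := hm ⟨⟨p, hp⟩, hpS⟩ k hpk
        have := Fact.mk hp
        have h2 : (p : ℤ_[p]) ^ k ∣ 0 - (m : ℕ) := h1
        rw [zero_sub, dvd_neg] at h2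
        have := (PadicInt.pow_p_dvd_int_iff (p := p) k m).1 (by simpa using h2)
        exact_mod_cast this
      obtain ⟨q, rfl⟩ := hnm
      have hgU : g ∈ U.toSubgroup := by
        have h1 : g / σ ^ (n * q) ∈ U.toSubgroup := hgm
        have h2 : σ ^ (n * q) ∈ U.toSubgroup := by
          rw [pow_mul]; exact pow_mem (hσn σ) q
        simpa using mul_mem h1 h2
      exact hU hgU rfl
    · refine isClosed_biUnion_finset fun m _ => IsClosed.inter ?_ ?_
      · exact hUc.preimage (by fun_prop)
      · refine isClosed_iInter fun p => isClosed_iInter fun k => isClosed_iInter fun _ => ?_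
        refine (isClosed_padic_dvd p.1.1 k _).preimage ?_
        exact continuous_toAdd.comp ((continuous_apply p).comp continuous_snd)
    · intro m
      have hn0' : (n : ℤ) ≠ 0 := by exact_mod_cast hn0
      obtain ⟨r, hr⟩ := Int.eq_ofNat_of_zero_le (Int.emod_nonneg m hn0')
      have hrm : m = r + (n : ℤ) * (m / (n : ℤ)) := by
        rw [← hr]; exact (Int.emod_add_mul_ediv _ _).symm
      have hrlt : r < n := by
        have := Int.emod_lt_of_pos m (by positivity : (0 : ℤ) < (n : ℤ))
        rw [hr] at this
        exact_mod_cast this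
      generalize m / (n : ℤ) = q at hrm
      simp only [Set.mem_iUnion, Set.mem_inter_iff, Set.mem_iInter]
      refine ⟨r, Finset.mem_range.2 hrlt, ?_, ?_⟩
      · simp only [Set.mem_preimage, SetLike.mem_coe]
        rw [hrm, zpow_add, zpow_natCast, mul_div_cancel_left, zpow_mul, zpow_natCast]
        exact zpow_mem (hσn σ) q
      · intro p k hpk
        simp only [Set.mem_preimage, Set.mem_ofPred_eq, PadicProd.gen_zpow, toAdd_ofAdd]
        obtain ⟨t, rfl⟩ := hpk
        rw [hrm]
        exact ⟨t * q, by push_cast; ring⟩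
  let ef : Γ ≃* G := MulEquiv.ofBijective f ⟨hfi, hfs⟩
  let eh : Γ ≃* PadicProd S := MulEquiv.ofBijective h ⟨hhi, hhs⟩
  have hef : Continuous ef.symm :=
    Continuous.continuous_symm_of_equiv_compact_to_t2 (f := ef.toEquiv) hfc
  have heh : Continuous eh.symm :=
    Continuous.continuous_symm_of_equiv_compact_to_t2 (f := eh.toEquiv) hhc
  exact ⟨ef.symm.trans eh, hhc.comp hef, hfc.comp heh⟩

end PadicProducts

/-! ### The Galois group of the fixed field -/

/-- Lemma `lem:brauer`, first part: for a number field `K` with algebraic closure `K̄` and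
`σ ∈ Gal(K̄/K)`, the group `Gal(K̄/K̄^σ)` (with its Krull topology) is isomorphic as a
topological group either to `ℤ/2ℤ` or to a product `∏_{p ∈ S} ℤ_p` over some set `S` of
primes. -/
theorem galois_group_of_fixed_field_structure
    (K : Type*) [Field K] [NumberField K]
    (Kbar : Type*) [Field Kbar] [Algebra K Kbar] [IsAlgClosure K Kbar]
    (σ : Kbar ≃ₐ[K] Kbar) :
    (∃ e : (Kbar ≃ₐ[↥(IntermediateField.fixedField (Subgroup.zpowers σ))] Kbar) ≃*
        Multiplicative (ZMod 2), Continuous e ∧ Continuous e.symm) ∨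
    (∃ (S : Set Nat.Primes)
        (e : (Kbar ≃ₐ[↥(IntermediateField.fixedField (Subgroup.zpowers σ))] Kbar) ≃*
          (∀ p : S, Multiplicative (@PadicInt p.1.1 ⟨p.1.2⟩))),
        Continuous e ∧ Continuous e.symm) := by
  have : IsAlgClosed Kbar := IsAlgClosure.isAlgClosed K
  have : Algebra.IsAlgebraic K Kbar := IsAlgClosure.isAlgebraic
  have : CharZero Kbar := charZero_of_injective_algebraMap (algebraMap K Kbar).injective
  have : IsGalois K Kbar := {}
  let F := IntermediateField.fixedField (Subgroup.zpowers σ)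
  have : Algebra.IsAlgebraic F Kbar := Algebra.IsAlgebraic.tower_top (K := K) F
  have : IsGalois F Kbar := IsGalois.tower_top_of_isGalois K F Kbar
  have hmem : σ ∈ F.fixingSubgroup := by
    rw [IntermediateField.mem_fixingSubgroup_iff]
    intro x hx
    exact hx ⟨σ, Subgroup.mem_zpowers σ⟩
  let s : Kbar ≃ₐ[F] Kbar := IntermediateField.fixingSubgroupEquiv F ⟨σ, hmem⟩
  have hs : ∀ x, s x = σ x := fun _ => rfl
  have hcl : (Subgroup.zpowers s).topologicalClosure = ⊤ := by
    let H : ClosedSubgroup (Kbar ≃ₐ[F] Kbar) :=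
      ⟨(Subgroup.zpowers s).topologicalClosure, Subgroup.isClosed_topologicalClosure _⟩
    have h1 := InfiniteGalois.fixingSubgroup_fixedField H
    have h2 : IntermediateField.fixedField H.1 = ⊥ := by
      rw [eq_bot_iff]
      intro x hx
      rw [IntermediateField.mem_bot]
      have hsx : σ x = x :=
        hx ⟨s, Subgroup.le_topologicalClosure _ (Subgroup.mem_zpowers s)⟩
      refine ⟨⟨x, ?_⟩, rfl⟩
      rintro ⟨_, m, rfl⟩
      have hst : σ ∈ MulAction.stabilizer (Kbar ≃ₐ[K] Kbar) x := hsx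
      exact zpow_mem hst m
    rw [← show H.1 = (Subgroup.zpowers s).topologicalClosure from rfl, ← h1, h2]
    exact IntermediateField.fixingSubgroup_bot
  have hdense : Dense (Subgroup.zpowers s : Set (Kbar ≃ₐ[F] Kbar)) := by
    intro g
    have : g ∈ (Subgroup.zpowers s).topologicalClosure := hcl ▸ Subgroup.mem_top g
    exact this
  have : T2Space (Kbar ≃ₐ[F] Kbar) := krullTopology_t2
  have hcomm : ∀ g h : Kbar ≃ₐ[F] Kbar, g * h = h * g := by
    let _ := (Subgroup.zpowers s).commGroupTopologicalClosure (by
      rintro ⟨_, m, rfl⟩ ⟨_, n, rfl⟩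
      exact Subtype.ext ((Commute.refl s).zpow_zpow m n))
    intro g h
    have hg : g ∈ (Subgroup.zpowers s).topologicalClosure := hcl ▸ Subgroup.mem_top g
    have hh : h ∈ (Subgroup.zpowers s).topologicalClosure := hcl ▸ Subgroup.mem_top h
    exact congrArg Subtype.val (mul_comm (⟨g, hg⟩ : (Subgroup.zpowers s).topologicalClosure) ⟨h, hh⟩)
  by_cases htf : ∀ p : ℕ, p.Prime → ∀ g : Kbar ≃ₐ[F] Kbar, g ^ p = 1 → g = 1
  · right
    let _ : CommGroup (Kbar ≃ₐ[F] Kbar) := { (inferInstance : Group (Kbar ≃ₐ[F] Kbar)) with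
      mul_comm := hcomm }
    have : TotallyDisconnectedSpace (Kbar ≃ₐ[F] Kbar) := inferInstance
    exact procyclic_structure s hdense htf
  · left
    push Not at htf
    obtain ⟨p, hp, τ, hτ, hne⟩ := htf
    obtain ⟨h2, i, hi, hτi⟩ := artin_schreier τ hp hτ hne
    have hall : ∀ g : Kbar ≃ₐ[F] Kbar, g = 1 ∨ g = τ := fun g =>
      eq_one_or_eq_of_commute τ h2 hi hτi g (hcomm g τ)
    have huniv : (Set.univ : Set (Kbar ≃ₐ[F] Kbar)) = {1, τ} := by
      ext g; simpa using hall g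
    have : Finite (Kbar ≃ₐ[F] Kbar) :=
      Set.finite_univ_iff.1 (by rw [huniv]; exact (Set.finite_singleton τ).insert 1)
    have hcard : Nat.card (Kbar ≃ₐ[F] Kbar) = 2 := by
      rw [← Set.ncard_univ, huniv, Set.ncard_pair hne.symm]
    have : IsCyclic (Kbar ≃ₐ[F] Kbar) := isCyclic_of_prime_card (p := 2) hcard
    have : DiscreteTopology (Kbar ≃ₐ[F] Kbar) := inferInstance
    have : DiscreteTopology (Multiplicative (ZMod 2)) := ⟨rfl⟩
    let e : (Kbar ≃ₐ[F] Kbar) ≃* Multiplicative (ZMod 2) :=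
      mulEquivOfCyclicCardEq (by rw [hcard]; simp)
    exact ⟨e, continuous_of_discreteTopology, continuous_of_discreteTopology⟩
end

section
/- Let K be a totally imaginary number field with algebraic closure K̄ and let σ ∈ Gal(K̄/K). Then the group Gal(K̄/K̄^σ) of automorphisms of K̄ fixing K̄^σ pointwise is torsion-free: its only element of finite order is the identity. -/
/-!
This is the Artin–Schreier theorem for algebraic closures of number fields. A nontrivial torsion
element has a power `τ` of prime order `p`. The field `C = K̄` is a Kummer extension of the fixed
field of `τ`, since `τ` fixes the `p`-th roots of unity (`apply_primitiveRoot`), and taking the norm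
of a `p`-th root of a Kummer generator excludes odd `p` (`prime_order_eq_two`). The same norm
computation for `p = 2` shows that `τ` moves `√-1` (`involution_apply_I`).

The fixed field of `τ` is then real closed: its squares form the cone of a total ordering. Restricted
to `K`, this ordering is archimedean because `K` is algebraic over `ℚ`, so `K` embeds in `ℝ`
(`exists_real_embedding`), which a totally imaginary field does not.
-/

section Aux

variable {C : Type*} [Field C]

theorem apply_pow_succ (τ : RingAut C) (i : ℕ) (x : C) : (τ ^ (i + 1)) x = τ ((τ ^ i) x) := by
  rw [pow_succ']; rfl

/-- The automorphism induced by `τ` on the `p`-th roots of unity is `ζ ↦ ζ ^ k` with `k ^ p ≡ 1`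
mod `p`, so `k ≡ 1` by Fermat's little theorem. -/
theorem apply_primitiveRoot {p : ℕ} [Fact p.Prime] {τ : RingAut C} (hτ : τ ^ p = 1) {ζ : C}
    (hζ : IsPrimitiveRoot ζ p) : τ ζ = ζ := by
  have hp : p.Prime := Fact.out
  obtain ⟨k, -, hk⟩ := hζ.eq_pow_of_pow_eq_one (ξ := τ ζ)
    (by rw [← map_pow, hζ.pow_eq_one, map_one])
  have h (m : ℕ) : (τ ^ m) ζ = ζ ^ k ^ m := by
    induction m with
    | zero => simp
    | succ m ih => rw [apply_pow_succ, ih, map_pow, ← hk, ← pow_mul, pow_succ']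
  have hmod (a b : ℕ) : ζ ^ a = ζ ^ b ↔ a ≡ b [MOD p] := by
    have := (hζ.isUnit hp.ne_zero)
    rw [hζ.eq_orderOf]
    lift ζ to Cˣ using this
    simp only [← Units.val_pow_eq_pow_val, Units.val_inj, orderOf_units]
    exact pow_eq_pow_iff_modEq
  have h1 : ζ ^ k ^ p = ζ ^ 1 := by rw [← h p, hτ, pow_one, RingAut.one_apply]
  have h2 : ((k ^ p : ℕ) : ZMod p) = (1 : ℕ) :=
    (ZMod.natCast_eq_natCast_iff _ _ _).2 ((hmod _ _).1 h1)
  have h3 : (k : ZMod p) = (1 : ℕ) := by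
    rw [← h2, Nat.cast_pow, ZMod.pow_card]
  have h4 : k ≡ 1 [MOD p] := (ZMod.natCast_eq_natCast_iff _ _ _).1 h3
  rw [← hk, (hmod k 1).2 h4, pow_one]

/-- Kummer theory: an automorphism of order `n` fixing an `n`-th root of unity `ζ` has `ζ⁻¹` as
an eigenvalue. The eigenvector is a nonzero Lagrange resolvent, which exists by the linear
independence of characters. -/
theorem exists_eigenvector_s8 {n : ℕ} (hn : 0 < n) {τ : RingAut C} (hτ : orderOf τ = n) {ζ : C}
    (hζ : ζ ^ n = 1) (hfix : τ ζ = ζ) : ∃ b : C, b ≠ 0 ∧ τ b = ζ⁻¹ * b := by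
  have hζ0 : ζ ≠ 0 := by rintro rfl; simp [hn.ne'] at hζ
  have hinj : Function.Injective 
      (fun i : Fin n => (((τ ^ (i : ℕ) : RingAut C) : C →+* C) : C →* C)) := by
    intro i j hij
    have : τ ^ (i : ℕ) = τ ^ (j : ℕ) := by
      ext x
      exact DFunLike.congr_fun hij x
    exact Fin.ext (pow_injOn_Iio_orderOf (by simp [hτ]) (by simp [hτ]) this)
  have hli := (linearIndependent_monoidHom C C).comp _ hinj
  obtain ⟨x, hx⟩ : ∃ x : C, ∑ i ∈ Finset.range n, ζ ^ i * (τ ^ i) x ≠ 0 := by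
    by_contra! hx
    have := Fintype.linearIndependent_iff.1 hli (fun i => ζ ^ (i : ℕ)) (by
      ext x
      have h := hx x
      rw [Finset.sum_range] at h
      simpa using h) ⟨0, hn⟩
    simp at this
  refine ⟨_, hx, ?_⟩
  have hcycle : ∑ i ∈ Finset.range n, ζ ^ (i + 1) * (τ ^ (i + 1)) x
      = ∑ i ∈ Finset.range n, ζ ^ i * (τ ^ i) x := by
    have h1 := Finset.sum_range_succ (fun i => ζ ^ i * (τ ^ i) x) n
    rw [Finset.sum_range_succ', hζ, ← hτ, pow_orderOf_eq_one] at h1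
    rw [← hτ]
    simpa using h1
  conv_rhs => rw [← hcycle]
  rw [map_sum, Finset.mul_sum]
  refine Finset.sum_congr rfl fun i _ => ?_
  rw [map_mul, map_pow, hfix, ← apply_pow_succ, pow_succ' ζ i, mul_assoc, inv_mul_cancel_left₀ hζ0]

/-- If `b` spans a Kummer extension of odd prime degree `p` and `c ^ p = b`, then the norm of `c` is
a `τ`-invariant `p`-th root of `b ^ p`, hence a root of unity times `b`, and `b` would be fixed. -/
theorem prime_order_eq_two [IsAlgClosed C] [CharZero C] {p : ℕ} (hp : p.Prime) {τ : RingAut C}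
    (hτ : orderOf τ = p) : p = 2 := by
  by_contra hp2
  have : Fact p.Prime := ⟨hp⟩
  have : NeZero (p : C) := ⟨by exact_mod_cast hp.ne_zero⟩
  have hτp : τ ^ p = 1 := hτ ▸ pow_orderOf_eq_one τ
  obtain ⟨ζ, hζ⟩ := HasEnoughRootsOfUnity.exists_primitiveRoot C p
  have hfix := apply_primitiveRoot hτp hζ
  obtain ⟨b, hb0, hb⟩ := exists_eigenvector_s8 hp.pos hτ hζ.pow_eq_one hfix
  obtain ⟨c, hc⟩ := IsAlgClosed.exists_pow_nat_eq b hp.pos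
  have hbi (i : ℕ) : (τ ^ i) b = ζ⁻¹ ^ i * b := by
    induction i with
    | zero => simp
    | succ i ih => rw [apply_pow_succ, ih, map_mul, map_pow, map_inv₀, hfix, hb]; ring
  set N : C := ∏ i ∈ Finset.range p, (τ ^ i) c with hN
  have hc0 : c ≠ 0 := by rintro rfl; exact hb0 (by rw [← hc, zero_pow hp.ne_zero])
  have hτN : τ N = N := by
    have h1 := Finset.prod_range_succ (fun i => (τ ^ i) c) p
    rw [Finset.prod_range_succ', hτp] at h1
    rw [hN, map_prod]
    simp only [← apply_pow_succ]
    exact mul_right_cancel₀ hc0 h1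
  have hNp : N ^ p = b ^ p := by
    rw [hN, ← Finset.prod_pow]
    simp only [← map_pow, hc, hbi, Finset.prod_mul_distrib,
      Finset.prod_const, Finset.card_range]
    obtain ⟨m, hm⟩ := hp.odd_of_ne_two hp2
    have : ∑ i ∈ Finset.range p, i = p * m := by
      rw [Finset.sum_range_id, hm]
      simp only [Nat.add_sub_cancel]
      rw [mul_left_comm, Nat.mul_div_cancel_left _ two_pos]
    rw [Finset.prod_pow_eq_pow_sum, this, pow_mul, inv_pow, hζ.pow_eq_one]
    simp
  obtain ⟨j, -, hj⟩ := hζ.eq_pow_of_pow_eq_one (ξ := N / b)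
    (by rw [div_pow, hNp, div_self (pow_ne_zero _ hb0)])
  have hNb : N = ζ ^ j * b := by rw [hj, div_mul_cancel₀ _ hb0]
  have hζ0 : ζ ≠ 0 := hζ.ne_zero hp.ne_zero
  rw [hNb, map_mul, map_pow, hfix, hb] at hτN
  have h2 := mul_left_cancel₀ (pow_ne_zero j hζ0) hτN
  have h3 : ζ⁻¹ = 1 := mul_right_cancel₀ hb0 (by rw [h2, one_mul])
  exact hζ.ne_one hp.one_lt (inv_eq_one.1 h3)

/-- If `I` were fixed, take `τ b = -b` and `c ^ 2 = b`: the fixed element `c * τ c` squares to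
`-b ^ 2`, so equals `± I * b`, which is negated. -/
theorem involution_apply_I [IsAlgClosed C] [CharZero C] {τ : RingAut C}
    (hτ : orderOf τ = 2) {I : C} (hI : I ^ 2 = -1) : τ I = -I := by
  have hττ (x : C) : τ (τ x) = x := by
    have : τ ^ 2 = 1 := hτ ▸ pow_orderOf_eq_one τ
    rw [sq] at this
    exact DFunLike.congr_fun this x
  have h1 : τ I ^ 2 = I ^ 2 := by rw [← map_pow, hI, map_neg, map_one]
  refine (sq_eq_sq_iff_eq_or_eq_neg.1 h1).resolve_left fun hfix => ?_
  obtain ⟨b, hb0, hb⟩ := exists_eigenvector_s8 two_pos hτ (ζ := -1) (by norm_num) (by simp)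
  have hb : τ b = -b := by simpa [inv_neg] using hb
  obtain ⟨c, hc⟩ := IsAlgClosed.exists_pow_nat_eq b two_pos
  have hn : τ (c * τ c) = c * τ c := by rw [map_mul, hττ, mul_comm]
  have hn2 : (c * τ c) ^ 2 = (I * b) ^ 2 := by
    rw [mul_pow, ← map_pow, hc, hb, mul_pow, hI]; ring
  have hIb : I * b = 0 := by
    rcases sq_eq_sq_iff_eq_or_eq_neg.1 hn2 with h | h <;> rw [h] at hn <;>
      simp only [map_neg, map_mul, hfix, hb] at hn
    · linear_combination (-1 / 2 : C) * hn
    · linear_combination (1 / 2 : C) * hn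
  have hI0 : I ≠ 0 := by rintro rfl; norm_num at hI
  exact (mul_ne_zero hI0 hb0) hIb

/-- An ordered field algebraic over `ℚ` is archimedean: a root of a monic rational polynomial is
bounded by `1` or by the sum of the absolute values of the coefficients. -/
theorem archimedean_of_isAlgebraic (F : Type*) [Field F] [LinearOrder F] [IsStrictOrderedRing F]
    [Algebra.IsAlgebraic ℚ F] : Archimedean F := by
  rw [archimedean_iff_rat_le]
  intro x
  rcases le_total x 1 with hx | hx
  · exact ⟨1, by simpa using hx⟩
  have hint : IsIntegral ℚ x := (Algebra.IsAlgebraic.isAlgebraic x).isIntegral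
  set f := minpoly ℚ x with hf
  obtain ⟨n, hn⟩ : ∃ n, f.natDegree = n + 1 :=
    Nat.exists_eq_add_one.2 (minpoly.natDegree_pos hint)
  have h0 : Polynomial.aeval x f = 0 := minpoly.aeval ℚ x
  rw [Polynomial.aeval_eq_sum_range, hn, Finset.sum_range_succ, ← hn,
    (minpoly.monic hint).coeff_natDegree, hn, one_smul] at h0
  refine ⟨∑ i ∈ Finset.range (n + 1), |f.coeff i|, ?_⟩
  have hx0 : 0 < x := zero_lt_one.trans_le hx
  refine le_of_mul_le_mul_right (?_ : x * x ^ n ≤ _ * x ^ n) (pow_pos hx0 n)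
  calc x * x ^ n = ∑ i ∈ Finset.range (n + 1), -(f.coeff i • x ^ i) := by
        rw [Finset.sum_neg_distrib]; linear_combination h0
    _ ≤ ∑ i ∈ Finset.range (n + 1), (|f.coeff i| : ℚ) * x ^ n := by
        refine Finset.sum_le_sum fun i hi => ?_
        rw [Algebra.smul_def, ← neg_mul, eq_ratCast]
        have hi : i ≤ n := Nat.lt_succ_iff.1 (Finset.mem_range.1 hi)
        refine mul_le_mul ?_ (pow_le_pow_right₀ hx hi) (by positivity) (by positivity)
        exact_mod_cast neg_le_abs (f.coeff i)
    _ = _ := by rw [← Finset.sum_mul]; push_cast; rfl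

/-- The cone of the ordering on `K` comes from the squares of the real closed field fixed by `τ`.
Sums of squares are squares because `a ^ 2 + b ^ 2` is the norm of `a + b * I`, which is a square
in `C`. -/
theorem exists_real_embedding (K : Type*) [Field K] [CharZero K] [Algebra.IsAlgebraic ℚ K] [Algebra K C]
    [IsAlgClosed C] [CharZero C] {τ : RingAut C} (hτ : orderOf τ = 2)
    (hK : ∀ x : K, τ (algebraMap K C x) = algebraMap K C x) : Nonempty (K →+* ℝ) := by
  have hττ (x : C) : τ (τ x) = x := by
    have : τ ^ 2 = 1 := hτ ▸ pow_orderOf_eq_one τ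
    rw [sq] at this
    exact DFunLike.congr_fun this x
  obtain ⟨I, hI⟩ := IsAlgClosed.exists_pow_nat_eq (-1 : C) two_pos
  have hτI := involution_apply_I hτ hI
  have hI0 : I ≠ 0 := by rintro rfl; norm_num at hI
  let P : RingCone K :=
    { carrier := {x | ∃ y, τ y = y ∧ y ^ 2 = algebraMap K C x}
      zero_mem' := ⟨0, by simp⟩
      one_mem' := ⟨1, by simp⟩
      mul_mem' := by
        rintro _ _ ⟨a, ha, ha'⟩ ⟨b, hb, hb'⟩
        exact ⟨a * b, by rw [map_mul, ha, hb], by rw [mul_pow, ha', hb', map_mul]⟩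
      add_mem' := by
        rintro _ _ ⟨a, ha, ha'⟩ ⟨b, hb, hb'⟩
        obtain ⟨c, hc⟩ := IsAlgClosed.exists_pow_nat_eq (a + b * I) two_pos
        refine ⟨c * τ c, by rw [map_mul, hττ, mul_comm], ?_⟩
        rw [mul_pow, ← map_pow, hc, map_add τ, map_mul, ha, hb, hτI, map_add, ← ha', ← hb']
        linear_combination -b ^ 2 * hI
      eq_zero_of_mem_of_neg_mem' := by
        rintro x ⟨a, ha, ha'⟩ ⟨b, hb, hb'⟩
        have h : a ^ 2 = (I * b) ^ 2 := by
          rw [mul_pow, hI, hb', ha', map_neg]; ring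
        have hIb : τ (I * b) = -(I * b) := by rw [map_mul, hτI, hb]; ring
        have ha0 : a = 0 := by
          rcases sq_eq_sq_iff_eq_or_eq_neg.1 h with h | h
          · rw [← h, ha] at hIb
            exact self_eq_neg.1 hIb
          · rw [← neg_eq_iff_eq_neg.2 h, map_neg, ha, neg_neg] at hIb
            exact self_eq_neg.1 hIb.symm
        apply (algebraMap K C).injective
        rw [← ha', ha0, map_zero]; ring }
  have htotal (x : K) : x ∈ P ∨ -x ∈ P := by
    obtain ⟨y, hy⟩ := IsAlgClosed.exists_pow_nat_eq (algebraMap K C x) two_pos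
    have h : τ y ^ 2 = y ^ 2 := by rw [← map_pow, hy, hK]
    rcases sq_eq_sq_iff_eq_or_eq_neg.1 h with h | h
    · exact .inl ⟨y, h, hy⟩
    · exact .inr ⟨I * y, by rw [map_mul, hτI, h]; ring,
        by rw [mul_pow, hI, hy, map_neg]; ring⟩
  have : HasMemOrNegMem P := ⟨htotal⟩
  classical
  let _ : LinearOrder K := .mkOfAddGroupCone P
  have : IsOrderedRing K := .mkOfCone P
  have : IsStrictOrderedRing K := IsOrderedRing.toIsStrictOrderedRing K
  have := archimedean_of_isAlgebraic K
  exact ⟨(ConditionallyCompleteLinearOrderedField.inducedOrderRingHom K ℝ : K →+*o ℝ)⟩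

end Aux

/-- Lemma `lem:brauer`, second part: if `K` is a totally imaginary number field (no embedding
into `ℝ`) with algebraic closure `K̄` and `σ ∈ Gal(K̄/K)`, then the group `Gal(K̄/K̄^σ)` of
automorphisms of `K̄` fixing the fixed field `K̄^σ` pointwise is torsion-free. -/
theorem galois_group_of_fixed_field_torsion_free
    (K : Type*) [Field K] [NumberField K] (himag : IsEmpty (K →+* ℝ))
    (Kbar : Type*) [Field Kbar] [Algebra K Kbar] [IsAlgClosure K Kbar]
    (σ : Kbar ≃ₐ[K] Kbar)
    (τ : Kbar ≃ₐ[↥(IntermediateField.fixedField (Subgroup.zpowers σ))] Kbar)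
    (hτ : IsOfFinOrder τ) : τ = 1 := by
  have : IsAlgClosed Kbar := IsAlgClosure.isAlgClosed K
  have : CharZero Kbar := charZero_of_injective_algebraMap (algebraMap K Kbar).injective
  by_contra hne
  have hn : orderOf τ ≠ 0 := hτ.orderOf_pos.ne'
  obtain ⟨p, hp, hdvd⟩ := Nat.exists_prime_and_dvd (mt orderOf_eq_one_iff.1 hne)
  set ρ := τ ^ (orderOf τ / p) with hρ
  have hρp : orderOf ρ = p := orderOf_pow_orderOf_div hn hdvd
  let φ : (Kbar ≃ₐ[↥(IntermediateField.fixedField (Subgroup.zpowers σ))] Kbar) →* RingAut Kbar :=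
    { toFun := fun f => f.toRingEquiv
      map_one' := rfl
      map_mul' := fun _ _ => rfl }
  have hφ : Function.Injective φ := fun f g h => AlgEquiv.ext fun x => DFunLike.congr_fun h x
  have hord : orderOf (φ ρ) = p := (orderOf_injective φ hφ ρ).trans hρp
  have hp2 := prime_order_eq_two hp hord
  subst hp2
  obtain ⟨f⟩ := exists_real_embedding K hord fun x =>
    ρ.commutes (algebraMap K ↥(IntermediateField.fixedField (Subgroup.zpowers σ)) x)
  exact himag.false f
end

section
/- Let K be a totally imaginary number field with algebraic closure K̄ and let σ ∈ Gal(K̄/K). Then every nondegenerate quadratic form in three variables with coefficients in K has a nontrivial zero with coordinates in the fixed field K̄^σ. (Equivalently, every smooth conic curve defined over K has a K̄^σ-rational point.) -/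
open TensorProduct

set_option synthInstance.maxHeartbeats 1000000
set_option maxHeartbeats 1000000

/-!
Let `L` be the fixed field of `σ`. The proof avoids cohomology and only uses two facts.

* `L` has at most two square classes (`isSquare_or_of_fixed`): if `α² = a` and `β² = b` with
  `α, β ∈ K̄` both outside `L`, then `σ` negates both of them, so `αβ ∈ L` and `ab` is a square.
* `x² + y² + z²` is isotropic over `L` (`exists_sum_three_sq_eq_zero`). If not, then `-1` is not a
  square in `L`, so every element of `L` is a square or minus a square, and the anisotropy makes the
  squares of `L` the nonnegative cone of a field ordering. Restricting it to `K` gives an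
  ordering of a number field. It is Archimedean, because an algebraic number is bounded in terms of
  the coefficients of its minimal polynomial, and so it comes from an embedding `K → ℝ`.

Diagonalise the form as `⟨w₀, w₁, w₂⟩`. If some `-wᵢwⱼ` is a square in `L`, the corresponding binary
form is isotropic. Otherwise all the `-wᵢwⱼ` lie in the nontrivial square class, hence the products
`wᵢwⱼ` are squares, and the form is similar to `x² + y² + z²`.
-/

/-! ### Orderings of number fields -/

/-- An ordered field that is algebraic over `ℚ` is Archimedean: if `xⁿ = -∑_{i<n} aᵢ xⁱ` and
`1 ≤ x`, then `x ≤ ∑ |aᵢ|`. -/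
lemma archimedean_of_algebraic {K : Type*} [Field K] [LinearOrder K] [IsStrictOrderedRing K]
    [Algebra ℚ K] [Algebra.IsAlgebraic ℚ K] : Archimedean K := by
  rw [archimedean_iff_nat_le]
  intro x
  by_cases hx1 : x ≤ 1
  · exact ⟨1, by simpa using hx1⟩
  push Not at hx1
  have hx0 : 0 < x := one_pos.trans hx1
  set p := minpoly ℚ x with hp
  have hint : IsIntegral ℚ x := (Algebra.IsAlgebraic.isAlgebraic x).isIntegral
  have hmon : p.Monic := minpoly.monic hint
  have hdeg : 0 < p.natDegree := minpoly.natDegree_pos hint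
  have heval : Polynomial.aeval x p = 0 := minpoly.aeval ℚ x
  rw [Polynomial.aeval_eq_sum_range, Finset.sum_range_succ, hmon.coeff_natDegree, one_smul] at heval
  obtain ⟨N, hN⟩ := exists_nat_ge (∑ i ∈ Finset.range p.natDegree, |p.coeff i|)
  refine ⟨N, ?_⟩
  have hNK : ∑ i ∈ Finset.range p.natDegree, |((p.coeff i : ℚ) : K)| ≤ (N : K) := by
    have : ((∑ i ∈ Finset.range p.natDegree, |p.coeff i| : ℚ) : K) ≤ ((N : ℚ) : K) := by
      exact_mod_cast hN
    simpa using this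
  refine le_trans ?_ hNK
  have hpow : 0 < x ^ (p.natDegree - 1) := pow_pos hx0 _
  refine le_of_mul_le_mul_right ?_ hpow
  rw [← pow_succ', Nat.sub_add_cancel hdeg, Finset.sum_mul]
  have : x ^ p.natDegree = ∑ i ∈ Finset.range p.natDegree, -(p.coeff i • x ^ i) := by
    rw [Finset.sum_neg_distrib]; linear_combination heval
  rw [this]
  refine Finset.sum_le_sum fun i hi => ?_
  have hi' : i ≤ p.natDegree - 1 := by have := Finset.mem_range.1 hi; omega
  calc -(p.coeff i • x ^ i) = (-((p.coeff i : ℚ) : K)) * x ^ i := by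
        rw [Algebra.smul_def, eq_ratCast]; ring
    _ ≤ |((p.coeff i : ℚ) : K)| * x ^ i :=
        mul_le_mul_of_nonneg_right (neg_le_abs _) (pow_pos hx0 _).le
    _ ≤ |((p.coeff i : ℚ) : K)| * x ^ (p.natDegree - 1) :=
        mul_le_mul_of_nonneg_left (pow_le_pow_right₀ hx1.le hi') (abs_nonneg _)

/-- A number field with a total nonnegative cone has a real embedding. -/
lemma nonempty_ringHom_real_of_cone {K : Type*} [Field K] [NumberField K] (C : RingCone K)
    (htot : ∀ x, x ∈ C ∨ -x ∈ C) : Nonempty (K →+* ℝ) := by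
  classical
  have : HasMemOrNegMem C := ⟨htot⟩
  let : LinearOrder K := .mkOfAddGroupCone C
  have : IsOrderedRing K := .mkOfCone C
  have : IsStrictOrderedRing K := IsOrderedRing.toIsStrictOrderedRing K
  have : Archimedean K := archimedean_of_algebraic
  exact ⟨(ConditionallyCompleteLinearOrderedField.inducedOrderRingHom K ℝ).toRingHom⟩

/-! ### Fields with at most two square classes -/

/-- If `L` has at most two square classes and contains a totally imaginary number field, then
`x² + y² + z²` is isotropic over `L`: otherwise the squares are the nonnegative cone of an
ordering. -/
lemma exists_sum_three_sq_eq_zero {K L : Type*} [Field K] [NumberField K]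
    (himag : IsEmpty (K →+* ℝ)) [Field L] [Algebra K L]
    (hsq : ∀ a b : L, IsSquare a ∨ IsSquare b ∨ IsSquare (a * b)) :
    ∃ x y z : L, (x ≠ 0 ∨ y ≠ 0 ∨ z ≠ 0) ∧ x * x + y * y + z * z = 0 := by
  by_contra hno
  have hno' : ∀ x y z : L, x * x + y * y + z * z = 0 → x = 0 ∧ y = 0 ∧ z = 0 := by
    intro x y z h
    by_contra hc
    exact hno ⟨x, y, z, by tauto, h⟩
  have hneg : ¬ IsSquare (-1 : L) := by
    rintro ⟨t, ht⟩
    exact one_ne_zero (hno' 1 t 0 (by linear_combination -ht)).1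
  have htot : ∀ a : L, IsSquare a ∨ IsSquare (-a) := by
    intro a
    rcases hsq a (-1) with h | h | h
    · exact .inl h
    · exact absurd h hneg
    · exact .inr (by simpa using h)
  have hanti : ∀ a : L, IsSquare a → IsSquare (-a) → a = 0 := by
    rintro a ⟨s, hs⟩ ⟨t, ht⟩
    rw [hs, (hno' s t 0 (by linear_combination -hs - ht)).1, mul_zero]
  have hadd : ∀ a b : L, IsSquare a → IsSquare b → IsSquare (a + b) := by
    rintro a b ⟨s, rfl⟩ ⟨t, rfl⟩
    rcases htot (s * s + t * t) with h | ⟨u, hu⟩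
    · exact h
    · obtain ⟨rfl, rfl, -⟩ := hno' s t u (by linear_combination -hu)
      simp
  let C : RingCone K :=
    { carrier := {x | IsSquare (algebraMap K L x)}
      mul_mem' := fun {a b} ha hb => by
        simpa using IsSquare.mul (show IsSquare (algebraMap K L a) from ha) hb
      one_mem' := by simp
      add_mem' := fun {a b} ha hb => by simpa using hadd _ _ ha hb
      zero_mem' := by simp
      eq_zero_of_mem_of_neg_mem' := fun {a} ha hb => by
        have hb' : IsSquare (algebraMap K L (-a)) := hb
        rw [map_neg] at hb'
        exact (map_eq_zero (algebraMap K L)).1 (hanti _ ha hb') }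
  obtain ⟨f⟩ := nonempty_ringHom_real_of_cone C fun x => by
    have := htot (algebraMap K L x)
    rwa [← map_neg] at this
  exact himag.false f

/-- Over a field with at most two square classes in which `x² + y² + z²` is isotropic, every ternary
diagonal form with nonzero coefficients is isotropic. -/
lemma exists_diagonal_zero {L : Type*} [Field L]
    (hsq : ∀ a b : L, IsSquare a ∨ IsSquare b ∨ IsSquare (a * b))
    (h3 : ∃ x y z : L, (x ≠ 0 ∨ y ≠ 0 ∨ z ≠ 0) ∧ x * x + y * y + z * z = 0)
    (a b c : L) (ha : a ≠ 0) (hb : b ≠ 0) (hc : c ≠ 0) :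
    ∃ x y z : L, (x ≠ 0 ∨ y ≠ 0 ∨ z ≠ 0) ∧ a * (x * x) + b * (y * y) + c * (z * z) = 0 := by
  by_cases hab : IsSquare (-(a * b))
  · obtain ⟨t, ht⟩ := hab
    exact ⟨t, a, 0, .inr (.inl ha), by linear_combination -a * ht⟩
  by_cases hac : IsSquare (-(a * c))
  · obtain ⟨t, ht⟩ := hac
    exact ⟨t, 0, a, .inr (.inr ha), by linear_combination -a * ht⟩
  by_cases hbc : IsSquare (-(b * c))
  · obtain ⟨t, ht⟩ := hbc
    exact ⟨0, t, b, .inr (.inr hb), by linear_combination -b * ht⟩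
  -- The product of the two nonsquares `-(ac)` and `-(bc)` is `ab·c²`.
  have key : ∀ p q r : L, r ≠ 0 → ¬ IsSquare (-(p * r)) → ¬ IsSquare (-(q * r)) →
      ∃ s, p * q = s * s := by
    intro p q r hr h1 h2
    rcases hsq (-(p * r)) (-(q * r)) with h | h | ⟨s, hs⟩
    · exact absurd h h1
    · exact absurd h h2
    · refine ⟨s / r, ?_⟩
      field_simp
      linear_combination hs
  obtain ⟨s, hs⟩ := key a b c hc hac hbc
  obtain ⟨t, ht⟩ := key a c b hb hab (by rwa [mul_comm])
  have hs0 : s ≠ 0 := by rintro rfl; exact mul_ne_zero ha hb (by simpa using hs)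
  have ht0 : t ≠ 0 := by rintro rfl; exact mul_ne_zero ha hc (by simpa using ht)
  obtain ⟨x, y, z, hxyz, h⟩ := h3
  refine ⟨x / a, y / s, z / t, ?_, ?_⟩
  · simpa [ha, hs0, ht0] using hxyz
  · -- `b = s²/a` and `c = t²/a`, so the form becomes `(x² + y² + z²)/a`.
    have hb' : b = s * s / a := by field_simp; linear_combination hs
    have hc' : c = t * t / a := by field_simp; linear_combination ht
    rw [hb', hc']
    field_simp
    linear_combination h

/-- The fixed field of a single automorphism of an algebraically closed field has at most two square
classes. -/
lemma isSquare_or_of_fixed {K Kbar : Type*} [Field K] [Field Kbar] [Algebra K Kbar]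
    [IsAlgClosed Kbar] (σ : Kbar ≃ₐ[K] Kbar)
    (a b : ↥(IntermediateField.fixedField (Subgroup.zpowers σ))) :
    IsSquare a ∨ IsSquare b ∨ IsSquare (a * b) := by
  have hmem : ∀ x : Kbar, σ x = x → x ∈ IntermediateField.fixedField (Subgroup.zpowers σ) := by
    intro x hx
    rw [IntermediateField.mem_fixedField_iff]
    intro f hf
    have : Subgroup.zpowers σ ≤ MulAction.stabilizer (Kbar ≃ₐ[K] Kbar) x := by
      rw [Subgroup.zpowers_le]; exact hx
    exact this hf
  have hfix : ∀ x : ↥(IntermediateField.fixedField (Subgroup.zpowers σ)), σ (x : Kbar) = x :=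
    fun x => (IntermediateField.mem_fixedField_iff _ _).1 x.2 σ (Subgroup.mem_zpowers σ)
  have hroot : ∀ x : ↥(IntermediateField.fixedField (Subgroup.zpowers σ)),
      ∃ r : Kbar, (x : Kbar) = r * r ∧ (σ r = r ∨ σ r = -r) := by
    intro x
    obtain ⟨r, hr⟩ := IsAlgClosed.exists_eq_mul_self (x : Kbar)
    refine ⟨r, hr, mul_self_eq_mul_self_iff.1 ?_⟩
    rw [← map_mul, ← hr, hfix]
  obtain ⟨r, hr, hr'⟩ := hroot a
  obtain ⟨s, hs, hs'⟩ := hroot b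
  rcases hr' with hr' | hr'
  · exact .inl ⟨⟨r, hmem r hr'⟩, Subtype.ext hr⟩
  rcases hs' with hs' | hs'
  · exact .inr (.inl ⟨⟨s, hmem s hs'⟩, Subtype.ext hs⟩)
  refine .inr (.inr ⟨⟨r * s, hmem _ (by rw [map_mul, hr', hs', neg_mul_neg])⟩, Subtype.ext ?_⟩)
  simp only [MulMemClass.coe_mul, hr, hs]
  ring

/-! ### Diagonalisation and base change -/

lemma exists_basis_diagonal {K : Type*} [Field K] [Invertible (2 : K)]
    (Q : QuadraticForm K (Fin 3 → K)) (hQ : LinearMap.ker (QuadraticMap.polarBilin Q) = ⊥) :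
    ∃ (B : Module.Basis (Fin 3) K (Fin 3 → K)) (w : Fin 3 → K), (∀ i, w i ≠ 0) ∧
      ∀ m, Q m = ∑ i, w i * (B.repr m i * B.repr m i) := by
  have hsep : (QuadraticMap.associated (R := K) Q).SeparatingLeft := by
    rw [LinearMap.separatingLeft_iff_ker_eq_bot, eq_bot_iff, ← hQ]
    intro x hx
    rw [LinearMap.mem_ker] at hx ⊢
    rw [← QuadraticMap.two_nsmul_associated K Q, LinearMap.smul_apply, hx, smul_zero]
  obtain ⟨w, ⟨e⟩⟩ := Q.equivalent_weightedSumSquares_units_of_nondegenerate' hsep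
  let f := finCongr (Module.finrank_fin_fun (n := 3) K)
  refine ⟨(Module.Basis.ofEquivFun e.toLinearEquiv).reindex f, fun i => w (f.symm i),
    fun i => (w _).ne_zero, fun m => ?_⟩
  rw [← e.map_app m, QuadraticMap.weightedSumSquares_apply, ← f.symm.sum_comp]
  refine Finset.sum_congr rfl fun i _ => ?_
  simp [Units.smul_def]

/-- A diagonalisation of `Q` over `K` also diagonalises its base change to `L`. -/
lemma baseChange_apply_diagonal {K L V : Type*} [Field K] [Invertible (2 : K)] [Field L]
    [Algebra K L] [AddCommGroup V] [Module K V] (Q : QuadraticForm K V)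
    (B : Module.Basis (Fin 3) K V) (w : Fin 3 → K)
    (hB : ∀ m, Q m = ∑ i, w i * (B.repr m i * B.repr m i)) (z : L ⊗[K] V) :
    Q.baseChange L z = ∑ i, algebraMap K L (w i) *
      ((B.baseChange L).repr z i * (B.baseChange L).repr z i) := by
  have h : Q.baseChange L =
      (QuadraticMap.weightedSumSquares L (fun i => algebraMap K L (w i))).comp
        (B.baseChange L).equivFun.toLinearMap := by
    apply baseChange_ext
    intro m
    rw [QuadraticForm.baseChange_tmul, hB]
    simp [QuadraticMap.weightedSumSquares_apply, Algebra.smul_def]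
  rw [h]
  simp [QuadraticMap.weightedSumSquares_apply]

/-- Lemma `lem:conic`: let `K` be a totally imaginary number field (no embedding into `ℝ`)
with algebraic closure `K̄`, and let `σ ∈ Gal(K̄/K)`. Then every nondegenerate quadratic form
in three variables over `K` (i.e. a quadratic form on `K³` whose polar bilinear form has
trivial radical) has a nontrivial zero with coordinates in the fixed field `K̄^σ`. -/
theorem conic_has_point_over_fixed_field
    (K : Type*) [Field K] [NumberField K] (himag : IsEmpty (K →+* ℝ))
    (Kbar : Type*) [Field Kbar] [Algebra K Kbar] [IsAlgClosure K Kbar]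
    (σ : Kbar ≃ₐ[K] Kbar)
    (Q : QuadraticForm K (Fin 3 → K))
    (hQ : LinearMap.ker (QuadraticMap.polarBilin Q) = ⊥) :
    ∃ v : Fin 3 → ↥(IntermediateField.fixedField (Subgroup.zpowers σ)), v ≠ 0 ∧
      Q.baseChange ↥(IntermediateField.fixedField (Subgroup.zpowers σ))
        (∑ i, v i ⊗ₜ Pi.single i (1 : K)) = 0 := by
  have : IsAlgClosed Kbar := IsAlgClosure.isAlgClosed K
  have hsq := isSquare_or_of_fixed σ
  set L := ↥(IntermediateField.fixedField (Subgroup.zpowers σ)) with hL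
  obtain ⟨B, w, hw, hB⟩ := exists_basis_diagonal Q hQ
  have hw' : ∀ i, algebraMap K L (w i) ≠ 0 := fun i => by simpa using hw i
  obtain ⟨x, y, z, hne, h0⟩ := exists_diagonal_zero hsq (exists_sum_three_sq_eq_zero himag hsq)
    _ _ _ (hw' 0) (hw' 1) (hw' 2)
  let u : L ⊗[K] (Fin 3 → K) := (B.baseChange L).equivFun.symm ![x, y, z]
  let E := (Pi.basisFun K (Fin 3)).baseChange L
  have hu : ∑ i, (E.equivFun u i) ⊗ₜ[K] (Pi.single i (1 : K) : Fin 3 → K) = u := by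
    conv_rhs => rw [← E.sum_equivFun u]
    refine Finset.sum_congr rfl fun i _ => ?_
    simp [E, TensorProduct.smul_tmul']
  have hrepr : ∀ i, (B.baseChange L).repr u i = ![x, y, z] i := fun i =>
    congrFun ((B.baseChange L).equivFun.apply_symm_apply ![x, y, z]) i
  refine ⟨E.equivFun u, fun hv => ?_, ?_⟩
  · have hu0 : u = 0 := E.equivFun.map_eq_zero_iff.1 hv
    have hx := hrepr 0
    have hy := hrepr 1
    have hz := hrepr 2
    simp only [hu0, map_zero, Finsupp.coe_zero, Pi.zero_apply] at hx hy hz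
    rcases hne with h | h | h
    · exact h hx.symm
    · exact h hy.symm
    · exact h hz.symm
  · rw [hu, baseChange_apply_diagonal Q B w hB, Fin.sum_univ_three, hrepr, hrepr, hrepr]
    exact h0
end

section
/- Let K be a field of characteristic 0 and let L be a finite extension of K. Let f be a polynomial in the variables X₁,…,X_n with coefficients in the polynomial ring L[t₁,…,t_m] that is irreducible as a polynomial in X₁,…,X_n over the rational function field L(t₁,…,t_m). Then there exists a polynomial p ∈ K[t₁,…,t_m, X₁,…,X_n], irreducible as a polynomial in X₁,…,X_n over K(t₁,…,t_m), such that H_K(p) ⊆ H_L(f). -/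
/-!
The polynomial `p` is the norm, from `L[t][X]` down to `K[t][X]`, of a translate of `f`.

*Specialization.* If `θ` generates `L` over `K`, then `1, θ, …, θ ^ (d - 1)` is a basis of `L[t][X]`
over `K[t][X]`, of `L(t)[X]` over `K(t)[X]` and of `L[X]` over `K[X]`, so norms commute with
passing to `K(t)` and with evaluating `t` at a point `a` of `K ^ m`
(`HasPowerBasis.map_norm`). A polynomial whose norm is irreducible is itself irreducible, since
norms of nonunits are nonunits; and a translation of the variables is an automorphism. Hence
irreducibility of `p` at `a` forces irreducibility of `f` at `a`.

*Irreducibility of the norm over `K(t)`.* Pick a variable `Y` occurring in `f` and regard `f` as a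
polynomial in `Y` over `S = L(t)[the other variables]`, which is free over
`R = K(t)[the other variables]`. Put `F = Frac R` and `E = Frac S`. By Gauss's lemma `f` is
irreducible in `E[Y]`; let `x` be the root of `f` in `M = E[Y] / (f)`. The field `M` is finite
separable over `F`, so it has finitely many intermediate fields, and as in the primitive element
theorem some `x - c θ` with `c` a natural number generates `M` over `F`. Let
`g = f(Y + c θ)`, which vanishes at `x - c θ`. Every nonzero `q` in `F[Y]` divisible by `g` has
degree at least `[M : F]`, and `[M : F]` is the degree of the norm of `g`
(`exists_natDegree_norm_le`). On the other hand, a prime of `R[Y]` dividing the norm of `g` is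
divisible by `g` in `S[Y]` (`HasPowerBasis.dvd_of_dvd_norm`). So in a factorization of the norm
into two nonunits both factors would have at least the degree of the product; this degree would
then be zero, although both factors are multiples of `g`, which has positive degree
(`exists_irreducible_norm_taylor`).
-/

/-- The Hilbert set of a polynomial `g` in the variables `X₁,…,X_n` with coefficients in
`M[t₁,…,t_m]`: the set of tuples `a ∈ M^m` such that the specialization `t ↦ a` of `g` is
irreducible in `M[X₁,…,X_n]`. -/
def hilbertSet {M : Type*} [Field M] {m n : ℕ}
    (g : MvPolynomial (Fin n) (MvPolynomial (Fin m) M)) : Set (Fin m → M) :=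
  {a | Irreducible (MvPolynomial.map (MvPolynomial.eval a) g)}

/-! ### Ring extensions with a power basis and their norms -/

attribute [local instance] Polynomial.algebra MvPolynomial.algebraMvPolynomial

/-- `S` is free over `R` with basis `1, θ, …, θ ^ (d - 1)`. -/
def HasPowerBasis (R : Type*) {S : Type*} [CommRing R] [CommRing S] [Algebra R S] (θ : S)
    (d : ℕ) : Prop :=
  ∃ b : Module.Basis (Fin d) R S, ∀ i, b i = θ ^ (i : ℕ)

namespace HasPowerBasis

variable {R S : Type*} [CommRing R] [CommRing S] [Algebra R S] {θ : S} {d : ℕ}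

theorem free (h : HasPowerBasis R θ d) : Module.Free R S :=
  Module.Free.of_basis h.choose

theorem finite (h : HasPowerBasis R θ d) : Module.Finite R S :=
  Module.Finite.of_basis h.choose

theorem algebraMap_injective [IsDomain R] [Nontrivial S] (h : HasPowerBasis R θ d) :
    Function.Injective (algebraMap R S) := by
  have := h.free
  exact FaithfulSMul.algebraMap_injective R S

theorem baseChange {R' S' : Type*} [CommRing R'] [CommRing S'] [Algebra R' S']
    [Algebra R R'] [Algebra S S'] [Algebra R S'] [IsScalarTower R R' S'] [IsScalarTower R S S']
    [hp : Algebra.IsPushout R R' S S'] (h : HasPowerBasis R θ d) :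
    HasPowerBasis R' (algebraMap S S' θ) d := by
  obtain ⟨b, hb⟩ := h
  exact ⟨hp.out.basis b, fun i => by simp [IsBaseChange.basis_apply, hb]⟩

theorem mvPolynomial (σ : Type*) (h : HasPowerBasis R θ d) :
    HasPowerBasis (MvPolynomial σ R) (MvPolynomial.C θ : MvPolynomial σ S) d :=
  h.baseChange (R' := MvPolynomial σ R) (S' := MvPolynomial σ S)

theorem polynomial (h : HasPowerBasis R θ d) :
    HasPowerBasis (Polynomial R) (Polynomial.C θ : Polynomial S) d :=
  h.baseChange (R' := Polynomial R) (S' := Polynomial S)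

theorem fractionRing [IsDomain R] [IsDomain S] (F E : Type*) [Field F] [Field E]
    [Algebra R F] [IsFractionRing R F] [Algebra S E] [IsFractionRing S E] [Algebra F E]
    [Algebra R E] [IsScalarTower R F E] [IsScalarTower R S E] (h : HasPowerBasis R θ d) :
    HasPowerBasis F (algebraMap S E θ) d := by
  have := h.finite
  have := h.free
  have : Algebra.IsAlgebraic R S := inferInstance
  have : IsLocalization (Algebra.algebraMapSubmonoid S (nonZeroDivisors R)) E := inferInstance
  obtain ⟨b, hb⟩ := h
  exact ⟨b.localizationLocalization F (nonZeroDivisors R) E, fun i => by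
    simp [hb]⟩

/-- Norms are compatible with any change of rings preserving the generator of the power basis. -/
theorem map_norm {R' S' : Type*} [CommRing R'] [CommRing S'] [Algebra R' S'] {θ' : S'}
    (h : HasPowerBasis R θ d) (h' : HasPowerBasis R' θ' d) (φ : R →+* R') (Φ : S →+* S')
    (hc : ∀ r, Φ (algebraMap R S r) = algebraMap R' S' (φ r)) (hθ : Φ θ = θ') (s : S) :
    φ (Algebra.norm R s) = Algebra.norm R' (Φ s) := by
  obtain ⟨b, hb⟩ := h
  obtain ⟨b', hb'⟩ := h'
  rw [Algebra.norm_eq_matrix_det b, Algebra.norm_eq_matrix_det b', RingHom.map_det]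
  congr 1
  ext i j
  have key : Φ s * b' j = ∑ k, φ (Algebra.leftMulMatrix b s k j) • b' k := by
    have h1 : s * b j = ∑ k, Algebra.leftMulMatrix b s k j • b k := by
      conv_lhs => rw [← b.sum_repr (s * b j)]
      simp [Algebra.leftMulMatrix_eq_repr_mul]
    have h2 := congrArg Φ h1
    simpa [Algebra.smul_def, hc, hb, hb', hθ] using h2
  rw [Algebra.leftMulMatrix_eq_repr_mul, key]
  simp [Finsupp.single_apply]

theorem norm_ne_zero [IsDomain R] [IsDomain S] (h : HasPowerBasis R θ d) {s : S} (hs : s ≠ 0) :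
    Algebra.norm R s ≠ 0 := by
  have := h.finite
  have := h.free
  exact Algebra.norm_ne_zero_iff.2 hs

theorem isUnit_of_norm (h : HasPowerBasis R θ d) {s : S} (hs : IsUnit (Algebra.norm R s)) :
    IsUnit s := by
  have := h.finite
  have := h.free
  rw [Algebra.norm_apply] at hs
  have hb := ((Module.End.isUnit_iff _).1 ((LinearMap.isUnit_iff_isUnit_det _).2 hs))
  obtain ⟨t, ht⟩ := hb.2 1
  exact IsUnit.of_mul_eq_one t ht

theorem irreducible_of_norm (h : HasPowerBasis R θ d) {s : S}
    (hs : Irreducible (Algebra.norm R s)) : Irreducible s := by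
  have := h.finite
  have := h.free
  refine ⟨fun hu => hs.not_isUnit (hu.map _), fun x y hxy => ?_⟩
  rw [hxy, map_mul] at hs
  exact (hs.isUnit_or_isUnit rfl).imp h.isUnit_of_norm h.isUnit_of_norm

/-- If the norm of a prime element `f` is divisible by a prime `q`, then `f` divides `q`:
modulo `q` multiplication by `f` has a nonzero kernel, so `f u = q v` with `q ∤ u`. -/
theorem dvd_of_dvd_norm [IsDomain S] (h : HasPowerBasis R θ d) {f : S} (hf : Prime f) {q : R}
    (hq : Prime q) (hqf : q ∣ Algebra.norm R f) : f ∣ algebraMap R S q := by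
  obtain ⟨b, -⟩ := h
  rw [Algebra.norm_eq_matrix_det b] at hqf
  let π := Ideal.Quotient.mk (Ideal.span {q})
  have : (Ideal.span {q}).IsPrime := (Ideal.span_singleton_prime hq.ne_zero).2 hq
  have h0 : (π.mapMatrix (Algebra.leftMulMatrix b f)).det = 0 := by
    rw [← RingHom.map_det]
    exact Ideal.Quotient.eq_zero_iff_dvd _ _ |>.2 hqf
  obtain ⟨v, hv, hv0⟩ := Matrix.exists_mulVec_eq_zero_iff.2 h0
  choose u hu using fun i => Ideal.Quotient.mk_surjective (I := Ideal.span {q}) (v i)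
  have hdvd : ∀ i, q ∣ ((Algebra.leftMulMatrix b f).mulVec u) i := by
    intro i
    rw [← Ideal.Quotient.eq_zero_iff_dvd]
    have := congrFun hv0 i
    simpa [Matrix.mulVec, dotProduct, hu, π] using this
  choose w hw using hdvd
  let U : S := b.equivFun.symm u
  let W : S := b.equivFun.symm w
  have hUu : b.equivFun U = u := b.equivFun.apply_symm_apply u
  have hWw : b.equivFun W = w := b.equivFun.apply_symm_apply w
  have hUW : f * U = algebraMap R S q * W := by
    apply b.equivFun.injective
    ext i
    have h1 := congrFun (Algebra.leftMulMatrix_mulVec_repr b f U) i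
    have h2 : (⇑(b.repr U) : Fin d → R) = u := hUu
    rw [h2, hw] at h1
    rw [← Algebra.smul_def, map_smul, hWw, Pi.smul_apply, smul_eq_mul, b.equivFun_apply, ← h1]
  rcases (hf.dvd_mul.1 (Dvd.intro U hUW)) with hd | ⟨W', hW'⟩
  · exact hd
  · exfalso
    apply hv
    have hU : U = algebraMap R S q * W' := by
      apply mul_left_cancel₀ hf.ne_zero
      rw [hUW, hW']; ring
    ext i
    rw [← hu i]
    have : u i = q * b.equivFun W' i := by
      have := congrFun (congrArg b.equivFun hU) i
      rwa [← Algebra.smul_def, map_smul, hUu, Pi.smul_apply, smul_eq_mul] at this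
    rw [this]
    exact Ideal.Quotient.eq_zero_iff_dvd _ _ |>.2 (dvd_mul_right _ _)

end HasPowerBasis

/-! ### One variable -/

section OneVariable

open Polynomial

/-- For a suitable translate of `f` by a multiple of `θ`, the image of the variable in the residue
field of the translate is a primitive element over `F`. Hence a nonzero polynomial over `F`
divisible by the translate has degree at least that of the norm, which is the degree of the residue
field over `F`. -/
theorem exists_natDegree_norm_le {F E : Type*} [Field F] [Field E] [CharZero F] [Algebra F E]
    {θ : E} {d : ℕ} (h : HasPowerBasis F θ d) {f : E[X]} (hf : Irreducible f) :
    ∃ c : ℕ, ∀ q : F[X], q ≠ 0 → taylor (c * θ) f ∣ q.map (algebraMap F E) →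
      (Algebra.norm F[X] (taylor (c * θ) f)).natDegree ≤ q.natDegree := by
  have hfin := h.finite
  have := Fact.mk hf
  have hf0 := hf.ne_zero
  have : FiniteDimensional E (AdjoinRoot f) := (AdjoinRoot.powerBasis hf0).finite
  have : FiniteDimensional F (AdjoinRoot f) := FiniteDimensional.trans F E (AdjoinRoot f)
  have : Finite (IntermediateField F (AdjoinRoot f)) :=
    Field.finite_intermediateField_of_exists_primitive_element F _
      (Field.exists_primitive_element F _)
  let ϑ : AdjoinRoot f := algebraMap E _ θ
  let α : ℕ → AdjoinRoot f := fun c => AdjoinRoot.root f - c * ϑ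
  -- two of the infinitely many translates generate the same intermediate field
  obtain ⟨c, c', hne, hcc⟩ := Finite.exists_ne_map_eq_of_infinite
    (fun c : ℕ => IntermediateField.adjoin F {α c})
  have hα : α c ∈ IntermediateField.adjoin F {α c} := IntermediateField.mem_adjoin_simple_self _ _
  have hα' : α c' ∈ IntermediateField.adjoin F {α c} := by
    have := IntermediateField.mem_adjoin_simple_self F (α c')
    rwa [← hcc] at this
  have : CharZero (AdjoinRoot f) := charZero_of_injective_algebraMap (algebraMap F _).injective
  have hϑ : ϑ ∈ IntermediateField.adjoin F {α c} := by
    have hne' : (c' : AdjoinRoot f) - c ≠ 0 := sub_ne_zero.2 (by exact_mod_cast hne.symm)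
    have : ϑ = (α c - α c') / (c' - c) := by
      rw [eq_div_iff hne']; simp only [α]; ring
    rw [this]
    exact div_mem (sub_mem hα hα') (sub_mem (natCast_mem _ _) (natCast_mem _ _))
  have hroot : AdjoinRoot.root f ∈ IntermediateField.adjoin F {α c} := by
    have : AdjoinRoot.root f = α c + c * ϑ := by simp [α]
    rw [this]
    exact add_mem hα (mul_mem (natCast_mem _ _) hϑ)
  have hE : ∀ e : E, algebraMap E (AdjoinRoot f) e ∈ IntermediateField.adjoin F {α c} := by
    intro e
    obtain ⟨b, hb⟩ := h
    rw [← b.sum_repr e, map_sum]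
    refine sum_mem fun i _ => ?_
    rw [Algebra.smul_def, map_mul, ← IsScalarTower.algebraMap_apply, hb, map_pow]
    exact mul_mem (IntermediateField.algebraMap_mem _ _) (pow_mem hϑ _)
  have htop : IntermediateField.adjoin F {α c} = ⊤ := by
    rw [eq_top_iff]
    intro x _
    obtain ⟨g, rfl⟩ := AdjoinRoot.mk_surjective x
    rw [← AdjoinRoot.aeval_eq, aeval_eq_sum_range]
    refine sum_mem fun i _ => ?_
    rw [Algebra.smul_def]
    exact mul_mem (hE _) (pow_mem hroot _)
  refine ⟨c, fun q hq0 hdvd => ?_⟩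
  have hdeg := (Field.primitive_element_iff_minpoly_natDegree_eq F (α c)).1 htop
  have hq : aeval (α c) q = 0 := by
    rw [← aeval_map_algebraMap E]
    obtain ⟨r, hr⟩ := hdvd
    rw [hr, map_mul, taylor_apply, aeval_comp]
    have : aeval (α c) (X + C (c * θ)) = AdjoinRoot.root f := by
      simp [α, ϑ]
    rw [this, AdjoinRoot.aeval_eq, AdjoinRoot.mk_self, zero_mul]
  have hle := natDegree_le_of_dvd (minpoly.dvd F (α c) hq) hq0
  refine le_trans (le_of_eq ?_) hle
  rw [hdeg]
  have hft : taylor (c * θ) f ≠ 0 := by simpa using hf0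
  obtain ⟨b, -⟩ := h.polynomial
  have h1 := finrank_quotient_span_eq_natDegree_norm (F := F) b hft
  have h2 : Module.finrank F (AdjoinRoot (taylor (c * θ) f)) = Module.finrank F (AdjoinRoot f) := by
    rw [← Module.finrank_mul_finrank F E, ← Module.finrank_mul_finrank F E (AdjoinRoot f),
      (AdjoinRoot.powerBasis hft).finrank, (AdjoinRoot.powerBasis hf0).finrank,
      AdjoinRoot.powerBasis_dim, AdjoinRoot.powerBasis_dim, natDegree_taylor]
  rw [← h1, ← h2]
  rfl

/-- A polynomial of positive degree, irreducible over the factorial domain `S`, has a translate whose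
norm is irreducible over `R`. If `d > 1` the translation is needed, for instance when `f` already has
coefficients in `R`. -/
theorem exists_irreducible_norm_taylor {R S : Type*} [CommRing R] [CommRing S] [IsDomain R]
    [IsDomain S] [UniqueFactorizationMonoid R] [UniqueFactorizationMonoid S] [CharZero R]
    [Algebra R S] {θ : S} {d : ℕ} (h : HasPowerBasis R θ d) {f : S[X]} (hf : Irreducible f)
    (hdeg : f.natDegree ≠ 0) :
    ∃ c : ℕ, Irreducible (Algebra.norm R[X] (taylor (c * θ) f)) := by
  have hinj := h.algebraMap_injective
  let F := FractionRing R
  let E := FractionRing S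
  have : FaithfulSMul R S := (faithfulSMul_iff_algebraMap_injective R S).2 hinj
  let : Algebra F E := FractionRing.liftAlgebra R E
  have : IsScalarTower R F E := FractionRing.isScalarTower_liftAlgebra R E
  have : CharZero F := charZero_of_injective_algebraMap (IsFractionRing.injective R F)
  have hFE : HasPowerBasis F (algebraMap S E θ) d := h.fractionRing F E
  have hfE : Irreducible (f.map (algebraMap S E)) :=
    ((hf.isPrimitive hdeg).irreducible_iff_irreducible_map_fraction_map).1 hf
  obtain ⟨c, hc⟩ := exists_natDegree_norm_le hFE hfE
  refine ⟨c, ?_⟩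
  set fc := taylor (c * θ) f with hfc
  have hmap : fc.map (algebraMap S E) = taylor (c * algebraMap S E θ) (f.map (algebraMap S E)) := by
    rw [hfc, taylor_apply, taylor_apply, Polynomial.map_comp, Polynomial.map_add, map_X, map_C,
      map_mul, map_natCast]
  have hirr : Irreducible fc := (MulEquiv.irreducible_iff (taylorEquiv (c * θ))).2 hf
  have hpow := h.polynomial
  have hnorm : (Algebra.norm R[X] fc).map (algebraMap R F) =
      Algebra.norm F[X] (fc.map (algebraMap S E)) :=
    hpow.map_norm hFE.polynomial (mapRingHom (algebraMap R F)) (mapRingHom (algebraMap S E))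
      (fun r => by
        change (r.map (algebraMap R S)).map (algebraMap S E) =
          (r.map (algebraMap R F)).map (algebraMap F E)
        rw [Polynomial.map_map, Polynomial.map_map, ← IsScalarTower.algebraMap_eq,
          ← IsScalarTower.algebraMap_eq]) (by simp) fc
  have hN0 := hpow.norm_ne_zero hirr.ne_zero
  have hinjF := IsFractionRing.injective R F
  -- every nonunit factor of the norm is divisible by `fc`, hence has the degree of the norm
  have key : ∀ g : R[X], ¬ IsUnit g → g ∣ Algebra.norm R[X] fc →
      fc ∣ g.map (algebraMap R S) ∧ (Algebra.norm R[X] fc).natDegree ≤ g.natDegree := by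
    intro g hg hgd
    have hg0 : g ≠ 0 := ne_zero_of_dvd_ne_zero hN0 hgd
    obtain ⟨q, hq, hqg⟩ := WfDvdMonoid.exists_irreducible_factor hg hg0
    have h1 : fc ∣ q.map (algebraMap R S) :=
      hpow.dvd_of_dvd_norm hirr.prime hq.prime (hqg.trans hgd)
    have h2 : fc ∣ g.map (algebraMap R S) := h1.trans (Polynomial.map_dvd _ hqg)
    refine ⟨h2, ?_⟩
    have h3 := Polynomial.map_dvd (algebraMap S E) h2
    rw [Polynomial.map_map, ← IsScalarTower.algebraMap_eq, IsScalarTower.algebraMap_eq R F E,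
      ← Polynomial.map_map, hmap] at h3
    have h4 := hc _ ((Polynomial.map_ne_zero_iff hinjF).2 hg0) h3
    rwa [← hmap, ← hnorm, natDegree_map_eq_of_injective hinjF,
      natDegree_map_eq_of_injective hinjF] at h4
  refine ⟨fun hu => hirr.not_isUnit (hpow.isUnit_of_norm hu), fun g k hgk => ?_⟩
  by_contra! hcon
  obtain ⟨hg, hk⟩ := hcon
  obtain ⟨hg1, hg2⟩ := key g hg (Dvd.intro _ hgk.symm)
  obtain ⟨-, hk2⟩ := key k hk (Dvd.intro_left _ hgk.symm)
  have hg0 : g ≠ 0 := by rintro rfl; simp [hgk] at hN0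
  have hk0 : k ≠ 0 := by rintro rfl; simp [hgk] at hN0
  have hsum : (Algebra.norm R[X] fc).natDegree = g.natDegree + k.natDegree := by
    rw [hgk, natDegree_mul hg0 hk0]
  have hle := natDegree_le_of_dvd hg1 ((Polynomial.map_ne_zero_iff hinj).2 hg0)
  rw [natDegree_map_eq_of_injective hinj, hfc, natDegree_taylor] at hle
  omega

end OneVariable

/-! ### Several variables -/

section SeveralVariables

open MvPolynomial

/-- The translation `X j ↦ X j + v j`, as an automorphism of the polynomial ring. -/
noncomputable def shiftVars {σ R : Type*} [CommRing R] (v : σ → R) :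
    MvPolynomial σ R ≃ₐ[R] MvPolynomial σ R :=
  AlgEquiv.ofAlgHom (aeval fun j => X j + C (v j)) (aeval fun j => X j - C (v j))
    (by ext; simp [algebraMap_eq]) (by ext; simp [algebraMap_eq])

theorem map_shiftVars {σ R R' : Type*} [CommRing R] [CommRing R'] (φ : R →+* R') (v : σ → R)
    (f : MvPolynomial σ R) : map φ (shiftVars v f) = shiftVars (φ ∘ v) (map φ f) := by
  have : (map φ).comp (shiftVars v).toRingEquiv.toRingHom =
      (shiftVars (φ ∘ v)).toRingEquiv.toRingHom.comp (map φ) := by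
    ext j <;> simp [shiftVars, algebraMap_eq]
  exact RingHom.congr_fun this f

/-- A polynomial ring in the variables `σ ≃ Option τ` as a ring of polynomials in the variable
corresponding to `none`, over the polynomial ring in the variables `τ`. -/
noncomputable def splitEquiv {σ τ : Type*} (R : Type*) [CommRing R] (e : σ ≃ Option τ) :
    MvPolynomial σ R ≃ₐ[R] Polynomial (MvPolynomial τ R) :=
  (renameEquiv R e).trans (optionEquivLeft R τ)

theorem splitEquiv_map {σ τ R R' : Type*} [CommRing R] [CommRing R'] (e : σ ≃ Option τ)
    (φ : R →+* R') (f : MvPolynomial σ R) :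
    splitEquiv R' e (map φ f) = (splitEquiv R e f).map (map φ) := by
  have : (splitEquiv R' e).toRingEquiv.toRingHom.comp (map φ) =
      (Polynomial.mapRingHom (map φ)).comp (splitEquiv R e).toRingEquiv.toRingHom := by
    ext j : 2
    · simp [splitEquiv]
    · rcases h : e j <;> simp [splitEquiv, h]
  exact RingHom.congr_fun this f

theorem splitEquiv_shiftVars {σ τ R : Type*} [DecidableEq σ] [CommRing R] (e : σ ≃ Option τ)
    (r : R) (f : MvPolynomial σ R) :
    splitEquiv R e (shiftVars (Pi.single (e.symm none) r) f) =
      Polynomial.taylor (C r) (splitEquiv R e f) := by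
  have : (splitEquiv R e).toRingEquiv.toRingHom.comp
        (shiftVars (Pi.single (e.symm none) r)).toRingEquiv.toRingHom =
      (Polynomial.taylorAlgHom (C r : MvPolynomial τ R)).toRingHom.comp (splitEquiv R e).toRingEquiv.toRingHom := by
    ext j : 2
    · simp [splitEquiv, shiftVars, algebraMap_eq]
    · rcases h : e j with _ | t
      · obtain rfl : j = e.symm none := by simp [← h]
        simp [splitEquiv, shiftVars, algebraMap_eq]
      · have hj : j ≠ e.symm none := by rintro rfl; simp at h
        simp [splitEquiv, shiftVars, h, hj]
  exact RingHom.congr_fun this f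

/-- Some variable occurs in an irreducible polynomial over a field. -/
theorem exists_natDegree_splitEquiv_ne_zero {σ E : Type*} [Field E]
    {f : MvPolynomial σ E} (hf : Irreducible f) :
    ∃ (i : σ) (e : σ ≃ Option {j // j ≠ i}), (splitEquiv E e f).natDegree ≠ 0 := by
  classical
  by_contra! hcon
  have h0 : ∀ i, f.degreeOf i = 0 := by
    intro i
    have := hcon i (Equiv.optionSubtypeNe i).symm
    rw [splitEquiv, AlgEquiv.trans_apply, natDegree_optionEquivLeft] at this
    rw [← this, renameEquiv_apply]
    have h1 := degreeOf_rename_of_injective (Equiv.optionSubtypeNe i).symm.injective i (p := f)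
    rw [← h1]
    simp
  have hC : f = C (coeff 0 f) := by
    rw [← totalDegree_eq_zero_iff_eq_C]
    rw [totalDegree_eq_zero_iff]
    intro m hm j
    have := (degreeOf_le_iff (n := j) (d := 0)).1 (h0 j).le m hm
    omega
  have hc : coeff 0 f ≠ 0 := fun h => hf.ne_zero (by rw [hC, h, C_0])
  exact hf.not_isUnit (by rw [hC]; exact (isUnit_iff_ne_zero.2 hc).map C)

theorem exists_irreducible_norm_shiftVars {σ F E : Type*} [DecidableEq σ] [Field F] [Field E]
    [CharZero F] [Algebra F E] {θ : E} {d : ℕ} (h : HasPowerBasis F θ d) {f : MvPolynomial σ E}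
    (hf : Irreducible f) :
    ∃ (i : σ) (c : ℕ),
      Irreducible (Algebra.norm (MvPolynomial σ F) (shiftVars (Pi.single i (c * θ)) f)) := by
  obtain ⟨i, e, hi⟩ := exists_natDegree_splitEquiv_ne_zero hf
  have hτ := h.mvPolynomial {j // j ≠ i}
  have : CharZero (MvPolynomial {j // j ≠ i} F) :=
    charZero_of_injective_algebraMap (algebraMap F _).injective
  obtain ⟨c, hc⟩ := exists_irreducible_norm_taylor hτ
    ((MulEquiv.irreducible_iff (splitEquiv E e)).2 hf) hi
  refine ⟨e.symm none, c, (MulEquiv.irreducible_iff (splitEquiv F e)).1 ?_⟩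
  have hnorm := (h.mvPolynomial σ).map_norm hτ.polynomial
    (splitEquiv F e).toRingEquiv.toRingHom (splitEquiv E e).toRingEquiv.toRingHom
    (splitEquiv_map e (algebraMap F E)) (by simp [splitEquiv])
    (shiftVars (Pi.single (e.symm none) (c * θ)) f)
  have hsplit := splitEquiv_shiftVars e (c * θ) f
  rw [map_mul, map_natCast] at hsplit
  rw [← hsplit] at hc
  exact hnorm ▸ hc

end SeveralVariables

/-- Lemma `lem:hilbert`: let `K` be a field of characteristic `0` and `L` a finite extension
of `K`. If `f ∈ L[t₁,…,t_m][X₁,…,X_n]` is irreducible over the rational function field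
`L(t₁,…,t_m)`, then there exists `p ∈ K[t₁,…,t_m][X₁,…,X_n]`, irreducible over
`K(t₁,…,t_m)`, such that `H_K(p) ⊆ H_L(f)`. -/
theorem hilbert_set_descends_to_base_field
    (K : Type*) [Field K] [CharZero K]
    (L : Type*) [Field L] [Algebra K L] [FiniteDimensional K L]
    (m n : ℕ) (f : MvPolynomial (Fin n) (MvPolynomial (Fin m) L))
    (hf : Irreducible (MvPolynomial.map
      (algebraMap (MvPolynomial (Fin m) L) (FractionRing (MvPolynomial (Fin m) L))) f)) :
    ∃ p : MvPolynomial (Fin n) (MvPolynomial (Fin m) K),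
      Irreducible (MvPolynomial.map
        (algebraMap (MvPolynomial (Fin m) K) (FractionRing (MvPolynomial (Fin m) K))) p) ∧
      ∀ a : Fin m → K, a ∈ hilbertSet p →
        (fun i => algebraMap K L (a i)) ∈ hilbertSet f := by
  let pb := Field.powerBasisOfFiniteOfSeparable K L
  let θ := pb.gen
  have hKL : HasPowerBasis K θ pb.dim := ⟨pb.basis, pb.basis_eq_pow⟩
  let R := MvPolynomial (Fin m) K
  let S := MvPolynomial (Fin m) L
  let ϑ : S := MvPolynomial.C θ
  have hRS : HasPowerBasis R ϑ pb.dim := hKL.mvPolynomial _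
  let F := FractionRing R
  let E := FractionRing S
  have : FaithfulSMul R S := (faithfulSMul_iff_algebraMap_injective R S).2 hRS.algebraMap_injective
  let : Algebra F E := FractionRing.liftAlgebra R E
  have : IsScalarTower R F E := FractionRing.isScalarTower_liftAlgebra R E
  have : CharZero R := charZero_of_injective_algebraMap (algebraMap K R).injective
  have : CharZero F := charZero_of_injective_algebraMap (IsFractionRing.injective R F)
  have hFE := hRS.fractionRing F E
  obtain ⟨i, c, hc⟩ := exists_irreducible_norm_shiftVars hFE hf
  let v : Fin n → S := Pi.single i (c * ϑ)
  refine ⟨Algebra.norm (MvPolynomial (Fin n) R) (shiftVars v f), ?_, fun a ha => ?_⟩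
  · have hv : algebraMap S E ∘ v = Pi.single i (c * algebraMap S E ϑ) := by
      ext j
      by_cases hj : j = i
      · subst hj; simp [v]
      · simp [v, hj]
    have hnorm := (hRS.mvPolynomial (Fin n)).map_norm (hFE.mvPolynomial (Fin n))
      (MvPolynomial.map (algebraMap R F)) (MvPolynomial.map (algebraMap S E))
      (fun r => by
        change MvPolynomial.map _ (MvPolynomial.map _ r) =
          MvPolynomial.map _ (MvPolynomial.map _ r)
        rw [MvPolynomial.map_map, MvPolynomial.map_map, ← IsScalarTower.algebraMap_eq,
          ← IsScalarTower.algebraMap_eq]) (MvPolynomial.map_C _ _) (shiftVars v f)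
    rw [map_shiftVars, hv] at hnorm
    exact hnorm ▸ hc
  · let a' : Fin m → L := fun i => algebraMap K L (a i)
    have hcomm : ∀ r : R, MvPolynomial.eval a' (algebraMap R S r) =
        algebraMap K L (MvPolynomial.eval a r) := by
      intro r
      change MvPolynomial.eval a' (MvPolynomial.map (algebraMap K L) r) = _
      rw [MvPolynomial.eval_map, MvPolynomial.eval₂_comp]
      rfl
    have hnorm := (hRS.mvPolynomial (Fin n)).map_norm (hKL.mvPolynomial (Fin n))
      (MvPolynomial.map (MvPolynomial.eval a)) (MvPolynomial.map (MvPolynomial.eval a'))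
      (fun r => by
        change MvPolynomial.map _ (MvPolynomial.map _ r) =
          MvPolynomial.map _ (MvPolynomial.map _ r)
        rw [MvPolynomial.map_map, MvPolynomial.map_map]
        exact congrArg (fun φ => MvPolynomial.map φ r) (RingHom.ext hcomm))
      (by rw [MvPolynomial.map_C, MvPolynomial.eval_C]) (shiftVars v f)
    have ha' : Irreducible (Algebra.norm (MvPolynomial (Fin n) K)
        (MvPolynomial.map (MvPolynomial.eval a') (shiftVars v f))) := hnorm ▸ ha
    have h1 := (hKL.mvPolynomial (Fin n)).irreducible_of_norm ha'
    rw [map_shiftVars] at h1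
    exact (MulEquiv.irreducible_iff (shiftVars _)).1 h1
end

section
/- Let F be a field that is algebraic over ℚ and formally real, i.e., −1 is not a sum of squares in F. Then F admits an embedding into ℝ, i.e., there exists a ring homomorphism (necessarily injective) from F into ℝ. -/
/-!
A formally real field carries an ordering: by Zorn's lemma there is a maximal preordering `P`
containing the sums of squares, and if `a ∉ P` then `P - a P` is again a preordering, so maximality
gives `-a ∈ P`. Hence `P` is the set of nonnegative elements of a linear order on `F`.

An ordered field algebraic over `ℚ` is Archimedean. Indeed, the elements bounded by a natural number
form a valuation subring containing `ℚ`; valuation rings are integrally closed, so this subring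
contains every algebraic element. Finally, an Archimedean ordered field embeds in the complete
ordered field `ℝ`.
-/

/-- If `P` is a preordering of a field and `a ∉ P`, then `P - a P` is a preordering; this is the
extension step in the construction of an ordering. -/
lemma exists_preordering_neg_mem {F : Type*} [Field F] (P : RingPreordering F) {a : F}
    (ha : a ∉ P) : ∃ Q : RingPreordering F, P ≤ Q ∧ -a ∈ Q := by
  refine ⟨RingPreordering.mk' {z | ∃ x ∈ P, ∃ y ∈ P, z = x - a * y} ?_ ?_ ?_ ?_, ?_, ?_⟩
  · rintro _ _ ⟨x, hx, y, hy, rfl⟩ ⟨x', hx', y', hy', rfl⟩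
    exact ⟨x + x', add_mem hx hx', y + y', add_mem hy hy', by ring⟩
  · rintro _ _ ⟨x, hx, y, hy, rfl⟩ ⟨x', hx', y', hy', rfl⟩
    exact ⟨x * x' + a * a * (y * y'),
      add_mem (mul_mem hx hx') (mul_mem (P.mul_self_mem a) (mul_mem hy hy')),
      x * y' + y * x', add_mem (mul_mem hx hy') (mul_mem hy hx'), by ring⟩
  · exact fun x ↦ ⟨x * x, P.mul_self_mem x, 0, zero_mem P, by ring⟩
  · rintro ⟨x, hx, y, hy, h⟩
    have hy0 : y ≠ 0 := by
      rintro rfl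
      exact P.neg_one_notMem (by simpa [h] using hx)
    -- `-1 = x - a y` would give `a = (1 + x) / y ∈ P`.
    have h2 : a = (1 + x) * y⁻¹ := by
      field_simp
      linear_combination h
    exact ha (h2 ▸ mul_mem (add_mem (one_mem P) hx) (RingPreordering.inv_mem hy))
  · exact fun x hx ↦ ⟨x, hx, 0, zero_mem P, by ring⟩
  · exact ⟨0, zero_mem P, 1, one_mem P, by ring⟩

lemma exists_maximal_preordering {F : Type*} [Field F] (hreal : ¬ IsSumSq (-1 : F)) :
    ∃ P : RingPreordering F, ∀ Q : RingPreordering F, P ≤ Q → Q ≤ P := by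
  let S : Set (Subsemiring F) := {T | (∀ x, IsSquare x → x ∈ T) ∧ -1 ∉ T}
  obtain ⟨M, -, hM⟩ := zorn_le_nonempty₀ S (fun c hcS hc y hy ↦ by
    have hmem {x : F} := Subsemiring.mem_sSup_of_directedOn ⟨y, hy⟩ hc.directedOn (x := x)
    refine ⟨sSup c, ⟨fun x hx ↦ hmem.2 ⟨y, hy, (hcS hy).1 x hx⟩, fun h ↦ ?_⟩,
      fun z hz ↦ le_sSup hz⟩
    obtain ⟨T, hT, h⟩ := hmem.1 h
    exact (hcS hT).2 h) (Subsemiring.sumSq F)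
    ⟨fun x hx ↦ Subsemiring.mem_sumSq.2 hx.isSumSq, by simpa using hreal⟩
  exact ⟨⟨M, fun {x} hx ↦ hM.1.1 x hx, hM.1.2⟩, fun Q hQ ↦
    hM.2 (y := Q.toSubsemiring) ⟨fun x hx ↦ Q.mem_of_isSquare hx, Q.neg_one_notMem⟩ hQ⟩

lemma exists_linearOrder_of_formally_real {F : Type*} [Field F] (hreal : ¬ IsSumSq (-1 : F)) :
    ∃ _ : LinearOrder F, IsStrictOrderedRing F := by
  classical
  obtain ⟨P, hP⟩ := exists_maximal_preordering hreal
  let C : RingCone F :=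
    { P.toSubsemiring with
      eq_zero_of_mem_of_neg_mem' := fun {a} (h : a ∈ P) (h' : -a ∈ P) ↦ by
        by_contra h0
        -- For `a ≠ 0`, the element `-1 = (-a) * a⁻¹` would lie in `P`.
        refine P.neg_one_notMem ?_
        have := mul_mem h' (RingPreordering.inv_mem h)
        rwa [neg_mul, mul_inv_cancel₀ h0] at this }
  have : HasMemOrNegMem C := ⟨fun a ↦ by
    by_cases ha : a ∈ P
    · exact .inl ha
    · obtain ⟨Q, hPQ, hQ⟩ := exists_preordering_neg_mem P ha
      exact .inr (hP Q hPQ hQ)⟩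
  let : LinearOrder F := .mkOfAddGroupCone C
  have : IsOrderedRing F := .mkOfCone C
  exact ⟨inferInstance, inferInstance⟩

/-- An ordered field that is algebraic over `ℚ` is Archimedean: its elements bounded by a natural
number form a valuation subring containing `ℚ`, and valuation rings are integrally closed. -/
lemma archimedean_of_isAlgebraic_rat {F : Type*} [Field F] [LinearOrder F] [IsStrictOrderedRing F]
    [Algebra ℚ F] [Algebra.IsAlgebraic ℚ F] : Archimedean F := by
  refine archimedean_iff_nat_lt.2 fun x ↦ ArchimedeanClass.exists_nat_gt_of_mk_nonneg ?_
  let O := (ArchimedeanClass.addValuation F).toValuation.valuationSubring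
  have hO (q : ℚ) : algebraMap ℚ F q ∈ O := by
    rw [eq_ratCast]
    exact ArchimedeanClass.mk_ratCast_nonneg q
  let f : ℚ →+* O := (algebraMap ℚ F).codRestrict O hO
  obtain ⟨p, hp, hpx⟩ := (Algebra.IsAlgebraic.isAlgebraic (R := ℚ) x).isIntegral
  have hx : IsIntegral O x := ⟨p.map f, hp.map f, by rw [Polynomial.eval₂_map]; exact hpx⟩
  obtain ⟨y, rfl⟩ := IsIntegrallyClosed.isIntegral_iff.1 hx
  exact y.2

/-- Lemma `lem:real1`: if a field `F` is algebraic over `ℚ` and formally real (`-1` is not a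
sum of squares in `F`), then `F` admits a (necessarily injective) ring homomorphism into
`ℝ`. -/
theorem exists_real_embedding_of_formally_real
    (F : Type*) [Field F] [Algebra ℚ F] [Algebra.IsAlgebraic ℚ F]
    (hreal : ¬ IsSumSq (-1 : F)) :
    Nonempty (F →+* ℝ) := by
  obtain ⟨_, _⟩ := exists_linearOrder_of_formally_real hreal
  have : Archimedean F := archimedean_of_isAlgebraic_rat
  exact ⟨(ConditionallyCompleteLinearOrderedField.inducedOrderRingHom F ℝ).toRingHom⟩
end

section
/- Let K be a number field with algebraic closure K̄ and let σ ∈ Gal(K̄/K). If no totally imaginary finite extension of K contained in K̄ is fixed pointwise by σ (i.e., every finite extension L of K with L ⊆ K̄^σ admits an embedding into ℝ), then σ is a complex conjugation automorphism, i.e., σ has order exactly 2 in Gal(K̄/K). -/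
/-!
Let `F` be the fixed field of `σ`. Every element of `F` has a `ℚ`-conjugate in `ℝ`, so by Isaacs'
theorem `F` itself embeds in `ℝ`; extend the embedding to `ψ : Kbar → ℂ`. Complex conjugation
pulls back along `ψ` to an automorphism `c` of `Kbar` that fixes `F`, so `c` lies in the closure
of the subgroup generated by `σ` and hence commutes with `σ`
(`commute_of_fixes_fixedField`). Therefore `σ` preserves the elements with real image under `ψ`.
Among these the ones with nonnegative image are exactly the squares, so `σ` is monotone on them;
as it also fixes `ℚ`, which is dense in `ℝ`, it fixes all of them (`fixes_real_of_preserves_real`).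
Since `Kbar` is generated over these elements by a square root of `-1`, `σ ^ 2 = 1`; and `σ ≠ 1`
because otherwise that square root would lie in `F` and have real image.
-/

open IntermediateField ComplexConjugate

/-- The fixing subgroup of the fixed field of `σ` is the closure of the powers of `σ`, which is
contained in the closed subgroup centralizing `σ`. -/
lemma commute_of_fixes_fixedField {K M : Type*} [Field K] [Field M] [Algebra K M] [IsGalois K M]
    (σ c : M ≃ₐ[K] M) (hc : ∀ x ∈ fixedField (Subgroup.zpowers σ), c x = x) :
    ∀ x, c (σ x) = σ (c x) := by
  have : T2Space (M ≃ₐ[K] M) := krullTopology_t2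
  let Z : ClosedSubgroup (M ≃ₐ[K] M) :=
    ⟨Subgroup.centralizer {σ}, Set.isClosed_centralizer _⟩
  have hσZ : Subgroup.zpowers σ ≤ Z.1 := by
    rw [Subgroup.zpowers_le]
    exact Subgroup.mem_centralizer_singleton_iff.2 rfl
  have hcZ : c ∈ Z.1 := by
    rw [← InfiniteGalois.fixingSubgroup_fixedField Z, IntermediateField.mem_fixingSubgroup_iff]
    intro x hx
    refine hc x ?_
    rw [IntermediateField.mem_fixedField_iff] at hx ⊢
    exact fun f hf => hx f (hσZ hf)
  intro x
  have := Subgroup.mem_centralizer_singleton_iff.1 hcZ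
  simpa using DFunLike.congr_fun this x

/-- An endomorphism of an algebraically closed subfield of `ℂ` that preserves the real elements
preserves their order, since the nonnegative ones are the squares of real ones; hence it fixes
them. -/
lemma fixes_real_of_preserves_real {M : Type*} [Field M] [IsAlgClosed M] (ψ : M →+* ℂ)
    (s : M →+* M) (hs : ∀ x, (ψ x).im = 0 → (ψ (s x)).im = 0) (x : M) (hx : (ψ x).im = 0) :
    s x = x := by
  have nonneg : ∀ y, (ψ y).im = 0 → 0 ≤ (ψ y).re → 0 ≤ (ψ (s y)).re := by
    intro y hy hy0
    obtain ⟨w, hw⟩ := IsAlgClosed.exists_pow_nat_eq y (n := 2) (by norm_num)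
    have hw' : ψ w ^ 2 = ψ y := by rw [← map_pow, hw]
    have hwim : (ψ w).im = 0 := by
      have h1 := congrArg Complex.re hw'
      have h2 := congrArg Complex.im hw'
      simp only [pow_two, Complex.mul_re, Complex.mul_im, hy] at h1 h2
      rcases mul_eq_zero.1 (show (ψ w).re * (ψ w).im = 0 by linarith) with h | h
      · rw [h] at h1; nlinarith
      · exact h
    have h3 := hs w hwim
    rw [← hw, map_pow, map_pow, pow_two, Complex.mul_re, h3]
    nlinarith [mul_self_nonneg (ψ (s w)).re]
  apply ψ.injective
  refine Complex.ext ?_ ((hs x hx).trans hx.symm)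
  rcases lt_trichotomy (ψ (s x)).re (ψ x).re with h | h | h
  · obtain ⟨q, h1, h2⟩ := exists_rat_btwn h
    have : CharZero M := (RingHom.charZero_iff ψ.injective).2 inferInstance
    have := nonneg (x - (q : M)) (by simp [hx]) (by simp; linarith)
    simp at this
    linarith
  · exact h
  · obtain ⟨q, h1, h2⟩ := exists_rat_btwn h
    have : CharZero M := (RingHom.charZero_iff ψ.injective).2 inferInstance
    have := nonneg ((q : M) - x) (by simp [hx]) (by simp; linarith)
    simp at this
    linarith

lemma exists_extension {F M : Type*} [Field F] [Field M] [Algebra F M] [Algebra.IsAlgebraic F M]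
    (g : F →+* ℂ) : ∃ ψ : M →+* ℂ, ∀ x, ψ (algebraMap F M x) = g x := by
  let : Algebra F ℂ := g.toAlgebra
  let ψ : M →ₐ[F] ℂ := IsAlgClosed.lift
  exact ⟨ψ, ψ.commutes⟩

/-- A subextension of an algebraic extension of a number field embeds in `ℝ` as soon as each of
its finite subextensions does; the embedding extends to an embedding of the algebraic closure
in `ℂ`. -/
lemma exists_embedding_real_on {K M : Type*} [Field K] [NumberField K] [Field M] [Algebra K M]
    [Algebra.IsAlgebraic K M] (F : IntermediateField K M)
    (h : ∀ L : IntermediateField K M, FiniteDimensional K L → L ≤ F → Nonempty (L →+* ℝ)) :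
    ∃ ψ : M →+* ℂ, ∀ x ∈ F, (ψ x).im = 0 := by
  have : CharZero M := charZero_of_injective_algebraMap (algebraMap K M).injective
  have : Algebra.IsAlgebraic ℚ M := Algebra.IsAlgebraic.trans ℚ K M
  have : Algebra.IsAlgebraic ℚ F :=
    Algebra.IsAlgebraic.of_injective ((algebraMap F M).toRatAlgHom) (algebraMap F M).injective
  obtain ⟨f⟩ : Nonempty (F →ₐ[ℚ] ℝ) := by
    refine Field.nonempty_algHom_of_exists_root fun x => ?_
    obtain ⟨g⟩ := h K⟮(x : M)⟯
      (IntermediateField.adjoin.finiteDimensional (Algebra.IsIntegral.isIntegral _))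
      (by simp)
    let y : K⟮(x : M)⟯ := ⟨x, IntermediateField.mem_adjoin_simple_self K (x : M)⟩
    have hy : Polynomial.aeval y (minpoly ℚ x) = 0 := by
      have h1 : Polynomial.aeval (x : M) (minpoly ℚ x) = 0 := by
        have := Polynomial.aeval_algHom_apply (algebraMap F M).toRatAlgHom x (minpoly ℚ x)
        rw [minpoly.aeval, map_zero] at this
        exact this
      apply (algebraMap K⟮(x : M)⟯ M).injective
      have := Polynomial.aeval_algHom_apply (algebraMap K⟮(x : M)⟯ M).toRatAlgHom y (minpoly ℚ x)
      rw [map_zero]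
      exact this.symm.trans h1
    refine ⟨g y, ?_⟩
    have := Polynomial.aeval_algHom_apply g.toRatAlgHom y (minpoly ℚ x)
    rw [hy, map_zero] at this
    exact this
  obtain ⟨ψ, hψ⟩ := exists_extension (M := M) ((algebraMap ℝ ℂ).comp f.toRingHom)
  refine ⟨ψ, fun x hx => ?_⟩
  have : ψ x = ((f ⟨x, hx⟩ : ℝ) : ℂ) := hψ ⟨x, hx⟩
  simp [this]

/-- Complex conjugation restricts to any normal extension of a field embedded in `ℝ`. -/
lemma exists_conj {K M : Type*} [Field K] [Field M] [Algebra K M] [Normal K M] (ψ : M →+* ℂ)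
    (hψ : ∀ a : K, (ψ (algebraMap K M a)).im = 0) :
    ∃ c : M ≃ₐ[K] M, ∀ x, ψ (c x) = conj (ψ x) := by
  let : Algebra M ℂ := ψ.toAlgebra
  let : Algebra K ℂ := (ψ.comp (algebraMap K M)).toAlgebra
  have : IsScalarTower K M ℂ := IsScalarTower.of_algebraMap_eq fun _ => rfl
  let τ : ℂ ≃ₐ[K] ℂ := AlgEquiv.ofRingEquiv (f := starRingAut)
    (fun a => Complex.conj_eq_iff_im.2 (hψ a))
  exact ⟨τ.restrictNormal M, fun x => τ.restrictNormal_commutes M x⟩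

/-- Lemma `lem:real`: let `K` be a number field with algebraic closure `K̄` and
`σ ∈ Gal(K̄/K)`. If every finite extension `L` of `K` contained in the fixed field `K̄^σ`
admits a ring homomorphism into `ℝ` (i.e. no totally imaginary finite extension of `K` is
fixed pointwise by `σ`), then `σ` is a complex conjugation automorphism, i.e. `σ` has order
exactly `2`. -/
theorem order_two_of_no_totally_imaginary_fixed_extension
    (K : Type*) [Field K] [NumberField K]
    (Kbar : Type*) [Field Kbar] [Algebra K Kbar] [IsAlgClosure K Kbar]
    (σ : Kbar ≃ₐ[K] Kbar)
    (h : ∀ L : IntermediateField K Kbar, FiniteDimensional K L →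
      L ≤ IntermediateField.fixedField (Subgroup.zpowers σ) → Nonempty (L →+* ℝ)) :
    orderOf σ = 2 := by
  have : IsAlgClosed Kbar := IsAlgClosure.isAlgClosed K
  have : Algebra.IsAlgebraic K Kbar := IsAlgClosure.isAlgebraic
  have : IsGalois K Kbar := {}
  obtain ⟨ψ, hψ⟩ := exists_embedding_real_on _ h
  obtain ⟨c, hc⟩ := exists_conj (K := K) ψ fun a => hψ _ (IntermediateField.algebraMap_mem _ a)
  have hcσ := commute_of_fixes_fixedField σ c fun x hx => ψ.injective <| by
    rw [hc, Complex.conj_eq_iff_im.2 (hψ x hx)]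
  have hfix : ∀ x, (ψ x).im = 0 → σ x = x := by
    refine fixes_real_of_preserves_real ψ (σ : Kbar →+* Kbar) fun x hx => ?_
    have hcx : c x = x := ψ.injective <| by rw [hc, Complex.conj_eq_iff_im.2 hx]
    rw [← Complex.conj_eq_iff_im, ← hc]
    exact congrArg ψ ((hcσ x).trans (by rw [hcx]; rfl))
  obtain ⟨i, hi⟩ := IsAlgClosed.exists_pow_nat_eq (-1 : Kbar) (n := 2) (by norm_num)
  have hψi : ψ i ^ 2 = -1 := by rw [← map_pow, hi]; simp
  have hi0 : ψ i ≠ 0 := by rintro h0; simp [h0] at hψi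
  have hψi_im : (ψ i).im ≠ 0 := by
    intro h0
    have := congrArg Complex.re hψi
    simp only [pow_two, Complex.mul_re, h0, Complex.neg_re, Complex.one_re] at this
    nlinarith [mul_self_nonneg (ψ i).re]
  have hconj_i : conj (ψ i) = -ψ i := by
    have h1 : (ψ i).re = 0 := by
      have := congrArg Complex.im hψi
      simp only [pow_two, Complex.mul_im, Complex.neg_im, Complex.one_im] at this
      have h2 : (ψ i).re * (ψ i).im = 0 := by linarith
      exact (mul_eq_zero.1 h2).resolve_right hψi_im
    apply Complex.ext <;> simp [h1]
  have hσσi : σ (σ i) = i := by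
    have : σ i ^ 2 = i ^ 2 := by rw [← map_pow, hi]; simp
    rcases sq_eq_sq_iff_eq_or_eq_neg.1 this with h1 | h1 <;> simp [h1]
  have : CharZero Kbar := (RingHom.charZero_iff ψ.injective).2 inferInstance
  rw [orderOf_eq_prime_iff]
  refine ⟨?_, ?_⟩
  · ext z
    have hi' : i ≠ 0 := fun h0 => hi0 (by simp [h0])
    -- the decomposition of `z` into real and imaginary parts
    have ha : σ ((z + c z) / 2) = (z + c z) / 2 := hfix _ <| by
      rw [← Complex.conj_eq_iff_im]
      simp only [map_div₀, map_add, hc, map_ofNat, Complex.conj_conj, add_comm]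
    have hb : σ ((z - c z) / (2 * i)) = (z - c z) / (2 * i) := hfix _ <| by
      rw [← Complex.conj_eq_iff_im]
      simp only [map_div₀, map_sub, map_mul, hc, hconj_i, map_ofNat, Complex.conj_conj]
      field_simp
      ring
    have hz : z = (z + c z) / 2 + (z - c z) / (2 * i) * i := by field_simp; ring
    generalize (z + c z) / 2 = a at *
    generalize (z - c z) / (2 * i) = b at *
    rw [pow_two, AlgEquiv.mul_apply, AlgEquiv.one_apply, hz]
    simp only [map_add, map_mul, ha, hb, hσσi]
  · rintro rfl
    exact hψi_im (hψ i (by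
      rw [IntermediateField.mem_fixedField_iff]
      simp))
end
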